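/- arXiv:1909.01516 — 3 statements merged into one kernel-verified Lean document; each statement's English description precedes it below -/
import Mathlib

section
/- Let H be a frustration-free Hamiltonian on a chain of n qudits as in the setup, with noncommutation degree g, L commuting layers, spectral gap γ, and local gaps γ(t). Suppose γ ≤ g²/4. Then for every integer t with 8L² < t < n/5, one has γ(t) ≤ 10³·L²·g²/t² + 6γ. The statement holds both for the closed chain and for the open chain (where H_n = 0). -/
open scoped ComplexOrder Fin.NatCast

variable {E : Type*} [NormedAddCommGroup E] [InnerProductSpace ℂ E] [FiniteDimensional ℂ E]

/-- An orthogonal projector: a self-adjoint idempotent operator. -/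
def IsProjector (P : E →L[ℂ] E) : Prop := IsSelfAdjoint P ∧ P * P = P

/-- The smallest nonzero (for a positive semidefinite operator, smallest positive)
eigenvalue of an operator. -/
noncomputable def minNonzeroEig (A : E →L[ℂ] E) : ℝ :=
  sInf {c : ℝ | 0 < c ∧ ∃ v : E, v ≠ 0 ∧ A v = (c : ℂ) • v}

/-- The Loewner order: `A ⪯ B` iff `B − A` is positive semidefinite. -/
def Loewner (A B : E →L[ℂ] E) : Prop := (B - A).IsPositive

/-- The contiguous (cyclic) segment of `t` qudits starting at qudit `a` of the chain. -/
def seg {n : ℕ} [NeZero n] (a : Fin n) (t : ℕ) : Finset (Fin n) :=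
  (Finset.range t).image (fun k : ℕ => a + (k : Fin n))

/-- The bond `(i, i+1)` lies inside the region `F`. -/
def bondIn {n : ℕ} [NeZero n] (i : Fin n) (F : Finset (Fin n)) : Prop := i ∈ F ∧ i + 1 ∈ F

instance {n : ℕ} [NeZero n] (F : Finset (Fin n)) : DecidablePred (fun i => bondIn i F) :=
  fun i => inferInstanceAs (Decidable (i ∈ F ∧ i + 1 ∈ F))

/-- A frustration-free nearest-neighbour Hamiltonian `H = Σ_{i=1}^n H_i`,
`H_i = Σ_j P_{ij}`, on a (cyclic) chain of `n` qudits whose joint Hilbert space is `E`: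
the `P_{ij}` are orthogonal projectors supported on the qudits `i, i+1`, each failing to
commute with at most `g` other members of the family, and the family is partitioned into
`L` layers of pairwise commuting projectors. -/
structure ChainSetup (n : ℕ) [NeZero n] (E : Type*) [NormedAddCommGroup E]
    [InnerProductSpace ℂ E] [FiniteDimensional ℂ E] where
  /-- the number of projectors making up the interaction `H_i` on the bond `(i, i+1)` -/
  m : Fin n → ℕ
  /-- the projectors `P_{ij}`, supported on the qudits `i, i+1` -/
  P : (i : Fin n) → Fin (m i) → (E →L[ℂ] E)
  /-- the noncommutation degree -/
  g : ℕ
  /-- the number of layers -/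
  L : ℕ
  /-- the assignment of each projector to a layer -/
  layer : ((i : Fin n) × Fin (m i)) → Fin L
  proj : ∀ i j, IsProjector (P i j)
  /-- operational form of two-body locality: interactions on disjoint bonds commute -/
  locality : ∀ (i i' : Fin n) (j : Fin (m i)) (j' : Fin (m i')),
    Disjoint ({i, i + 1} : Finset (Fin n)) ({i', i' + 1} : Finset (Fin n)) →
    Commute (P i j) (P i' j')
  /-- each projector fails to commute with at most `g` other members of the family -/
  gbound : ∀ p : (i : Fin n) × Fin (m i),
    Nat.card {q : (i : Fin n) × Fin (m i) // q ≠ p ∧ ¬ Commute (P p.1 p.2) (P q.1 q.2)} ≤ g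
  /-- projectors within each layer pairwise commute -/
  layers : ∀ p q : (i : Fin n) × Fin (m i), layer p = layer q →
    Commute (P p.1 p.2) (P q.1 q.2)
  /-- frustration-freeness: there is a nonzero state annihilated by every `P_{ij}` -/
  frustFree : ∃ v : E, v ≠ 0 ∧ ∀ i j, P i j v = 0

namespace ChainSetup

variable {n : ℕ} [NeZero n]

/-- the bond interaction `H_i = Σ_j P_{ij}` -/
noncomputable def Hbond (C : ChainSetup n E) (i : Fin n) : E →L[ℂ] E := ∑ j, C.P i j

/-- the full Hamiltonian `H = Σ_i H_i` -/
noncomputable def Hfull (C : ChainSetup n E) : E →L[ℂ] E := ∑ i, C.Hbond i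

/-- `h_F = Σ_{i : i,i+1 ∈ F} H_i`, the Hamiltonian restricted to the region `F` -/
noncomputable def hamOn (C : ChainSetup n E) (F : Finset (Fin n)) : E →L[ℂ] E :=
  ∑ i ∈ Finset.univ.filter (fun i => bondIn i F), C.Hbond i

/-- the spectral gap `γ` of `H` -/
noncomputable def gap (C : ChainSetup n E) : ℝ := minNonzeroEig C.Hfull

/-- The local gap `γ(t)`: the minimum of the spectral gaps of `h_S` over contiguous
segments `S` of length `t`.  For the open chain (`openBC = true`) only segments that do
not wrap around the end of the chain are allowed. -/
noncomputable def localGap (C : ChainSetup n E) (openBC : Bool) (t : ℕ) : ℝ :=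
  sInf {x : ℝ | ∃ a : Fin n, (openBC = true → (a : ℕ) + t ≤ n) ∧
    x = minNonzeroEig (C.hamOn (seg a t))}

/-- `Q_F`: the orthogonal projector onto the orthogonal complement of the ground space of
`h_F` (for `F = ∅` this is `0`). -/
noncomputable def Qproj (C : ChainSetup n E) (F : Finset (Fin n)) : E →L[ℂ] E :=
  (LinearMap.ker (C.hamOn F : E →ₗ[ℂ] E))ᗮ.subtypeL ∘L
    Submodule.orthogonalProjectionOnto (LinearMap.ker (C.hamOn F : E →ₗ[ℂ] E))ᗮ

end ChainSetup

/-- the cyclic successor on `Fin M` -/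
def cyc {M : ℕ} (k : Fin M) : Fin M := ⟨((k : ℕ) + 1) % M, Nat.mod_lt _ k.pos⟩

/-- A coarse-graining configuration with parameter `t` on a chain of `n` qudits:
`⌊n/t⌋` pairwise disjoint contiguous segments `S_k = seg (s k) t` of length `t` in cyclic
order, with `r_k ≤ t/4` qudits between consecutive segments, and pairwise disjoint
contiguous segments `T_k` of length `t` placed between consecutive `S`-segments, each
overlapping `S_k` and `S_{k+1}` in at least `⌊t/4⌋` qudits.  For the open chain, exactly the
last `T`-segment is empty, `S_1` starts at the first qudit and `S_{⌊n/t⌋}` ends at the last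
qudit. -/
structure CoarseGraining (n : ℕ) [NeZero n] (t : ℕ) where
  /-- the number of `S`-segments, `⌊n/t⌋` -/
  M : ℕ
  hM : M = n / t
  hMpos : 0 < M
  /-- the starting points of the `S`-segments -/
  s : Fin M → Fin n
  /-- the numbers `r_k` of qudits sandwiched between consecutive `S`-segments -/
  r : Fin M → ℕ
  hr : ∀ k, 4 * r k ≤ t
  /-- the `S`-segments appear in cyclic order, `S_{k+1}` starting `t + r_k` after `S_k` -/
  hs : ∀ k : Fin M, s (cyc k) = s k + ((t + r k : ℕ) : Fin n)
  hSdisj : ∀ k l : Fin M, k ≠ l → Disjoint (seg (s k) t) (seg (s l) t)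
  /-- the `T`-segments -/
  T : Fin M → Finset (Fin n)
  hT : ∀ k, (∃ a : Fin n, T k = seg a t) ∨ T k = ∅
  hTdisj : ∀ k l : Fin M, k ≠ l → Disjoint (T k) (T l)
  hoverlap₁ : ∀ k, T k ≠ ∅ → t / 4 ≤ ((seg (s k) t) ∩ T k).card
  hoverlap₂ : ∀ k, T k ≠ ∅ → t / 4 ≤ ((seg (s (cyc k)) t) ∩ T k).card
  /-- only the last `T`-segment may be empty (the open-chain case), and in that case
  `S_1` starts at the first qudit and `S_M` ends at the last qudit -/
  hTempty : ∀ k, T k = ∅ → (k : ℕ) = M - 1 ∧ (s ⟨0, hMpos⟩ : ℕ) = 0 ∧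
    (s ⟨M - 1, Nat.sub_lt hMpos one_pos⟩ : ℕ) + t = n

namespace ChainSetup

variable {n : ℕ} [NeZero n]

/-- the coarse-grained Hamiltonian `H̄(t) = Σ_k (Q_{S_k} + Q_{T_k})` -/
noncomputable def coarseHam (C : ChainSetup n E) (t : ℕ) (G : CoarseGraining n t) :
    E →L[ℂ] E :=
  ∑ k, (C.Qproj (seg (G.s k) t) + C.Qproj (G.T k))

/-- the coarse-grained detectability operator
`DL(t) = (∏_k (1 − Q_{S_k}))·(∏_k (1 − Q_{T_k}))` -/
noncomputable def coarseDL (C : ChainSetup n E) (t : ℕ) (G : CoarseGraining n t) :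
    E →L[ℂ] E :=
  ((List.finRange G.M).map (fun k => 1 - C.Qproj (seg (G.s k) t))).prod *
    ((List.finRange G.M).map (fun k => 1 - C.Qproj (G.T k))).prod

/-- the detectability-lemma operator `DL(H) = ∏_{α=1}^L ∏_{(i,j) ∈ T_α} (1 − P_{ij})`,
taken layer by layer -/
noncomputable def DLHam (C : ChainSetup n E) : E →L[ℂ] E :=
  ((List.finRange C.L).map (fun α =>
    (Finset.univ.filter (fun p : (i : Fin n) × Fin (C.m i) => C.layer p = α)).noncommProd
      (fun p => 1 - C.P p.1 p.2)
      (fun p hp q hq _ =>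
        Commute.sub_left (Commute.one_left _)
          (Commute.sub_right (Commute.one_right _)
            (C.layers p q (by
              simp only [Finset.coe_filter, Set.mem_setOf_eq] at hp hq
              rw [hp.2, hq.2])))))).prod

end ChainSetup

/-! ### Projectors -/

theorem proj_inner {P : E →L[ℂ] E} (h : IsProjector P) (x y : E) :
    inner ℂ (P x) y = inner ℂ x (P y) := by
  have h1 := ContinuousLinearMap.adjoint_inner_right P x y
  rw [show ContinuousLinearMap.adjoint P = P from h.1] at h1
  exact h1.symm

theorem proj_idem {P : E →L[ℂ] E} (h : IsProjector P) (x : E) : P (P x) = P x := by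
  have := congrArg (fun T : E →L[ℂ] E => T x) h.2
  simpa using this

theorem proj_re {P : E →L[ℂ] E} (h : IsProjector P) (x : E) :
    (inner ℂ x (P x)).re = ‖P x‖ ^ 2 := by
  rw [← proj_idem h, ← proj_inner h, proj_idem h]
  exact inner_self_eq_norm_sq (𝕜 := ℂ) _

theorem proj_pyth {P : E →L[ℂ] E} (h : IsProjector P) (x : E) :
    ‖x - P x‖ ^ 2 = ‖x‖ ^ 2 - ‖P x‖ ^ 2 := by
  have := @norm_sub_sq ℂ E _ _ _ x (P x)
  rw [this]
  have h2 : RCLike.re (inner ℂ x (P x)) = ‖P x‖ ^ 2 := proj_re h x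
  rw [h2]; ring

theorem proj_compl_le {P : E →L[ℂ] E} (h : IsProjector P) (x : E) :
    ‖x - P x‖ ≤ ‖x‖ := by
  have := proj_pyth h x
  exact le_of_sq_le_sq (by nlinarith [sq_nonneg ‖P x‖]) (norm_nonneg _)

theorem proj_commute_re {P Q : E →L[ℂ] E} (hP : IsProjector P) (hQ : IsProjector Q)
    (h : Commute P Q) (x : E) : 0 ≤ (inner ℂ (P x) (Q x)).re := by
  have hc : ∀ y, P (Q y) = Q (P y) := fun y => by
    have := congrArg (fun T : E →L[ℂ] E => T y) h.eq
    simpa using this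
  have : inner ℂ (P x) (Q x) = inner ℂ (P (Q x)) (P (Q x)) := by
    rw [proj_inner hP (Q x), proj_idem hP, hc, ← proj_inner hQ (Q x), proj_idem hQ]
    rw [proj_inner hP, hc, ← proj_inner hQ]
  rw [this]
  exact inner_self_nonneg (𝕜 := ℂ)

/-! ### Detectability lemma -/

section DL

variable {ι : Type*} [Fintype ι]

open Classical in
theorem dl_aux (P : ι → E →L[ℂ] E) (hP : ∀ p, IsProjector (P p)) (ψ : E) (l : List ι)
    (hl : l.Nodup) :
    ∃ a : ι → ℝ, (∀ q, 0 ≤ a q) ∧ (∀ q, q ∉ l → a q = 0) ∧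
      ∑ q, a q ^ 2 = ‖ψ‖ ^ 2 - ‖(l.map (fun p => 1 - P p)).prod ψ‖ ^ 2 ∧
      ∀ p ∈ l, ‖P p ((l.map (fun p => 1 - P p)).prod ψ)‖ ≤
        ∑ q ∈ Finset.univ.filter (fun q => q ≠ p ∧ ¬ Commute (P p) (P q)), a q := by
  induction l with
  | nil => exact ⟨fun _ => 0, by simp, by simp, by simp, by simp⟩
  | cons q l ih =>
    obtain ⟨hq, hl'⟩ := List.nodup_cons.mp hl
    obtain ⟨a, ha0, has, hsum, hb⟩ := ih hl'
    set φ := (l.map (fun p => 1 - P p)).prod ψ with hφ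
    have hprod : ((q :: l).map (fun p => 1 - P p)).prod ψ = φ - P q φ := by
      simp [hφ]
    rw [hprod]
    have hle : ∀ r, a r ≤ Function.update a q ‖P q φ‖ r := by
      intro r
      by_cases hr : r = q
      · subst hr; simp [has r hq]
      · simp [hr]
    refine ⟨Function.update a q ‖P q φ‖, ?_, ?_, ?_, ?_⟩
    · intro r; exact (ha0 r).trans (hle r)
    · intro r hr
      simp only [List.mem_cons, not_or] at hr
      simp [hr.1, has r hr.2]
    · rw [proj_pyth (hP q)]
      have : ∑ r, Function.update a q ‖P q φ‖ r ^ 2 = ∑ r, a r ^ 2 + ‖P q φ‖ ^ 2 := by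
        rw [← Finset.add_sum_erase _ _ (Finset.mem_univ q),
          ← Finset.add_sum_erase Finset.univ (fun r => a r ^ 2) (Finset.mem_univ q)]
        have : ∑ x ∈ Finset.univ.erase q, Function.update a q ‖P q φ‖ x ^ 2
            = ∑ x ∈ Finset.univ.erase q, a x ^ 2 := by
          apply Finset.sum_congr rfl
          intro x hx
          simp [Finset.ne_of_mem_erase hx]
        rw [this]
        simp [has q hq]; ring
      rw [this, hsum]; ring
    · intro p hp
      rcases List.mem_cons.mp hp with rfl | hp
      · rw [map_sub, proj_idem (hP p), sub_self, norm_zero]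
        exact Finset.sum_nonneg fun r _ => (ha0 r).trans (hle r)
      · have hpq : q ≠ p := fun h => hq (h ▸ hp)
        by_cases hc : Commute (P p) (P q)
        · have hc' : P p (P q φ) = P q (P p φ) := by
            have := congrArg (fun T : E →L[ℂ] E => T φ) hc.eq
            simpa using this
          rw [map_sub, hc']
          refine (proj_compl_le (hP q) _).trans ((hb p hp).trans ?_)
          exact Finset.sum_le_sum fun r _ => hle r
        · have h1 : ‖P p (P q φ)‖ ≤ ‖P q φ‖ := by
            have := proj_pyth (hP p) (P q φ)
            exact le_of_sq_le_sq (by nlinarith [sq_nonneg ‖P q φ - P p (P q φ)‖]) (norm_nonneg _)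
          rw [map_sub]
          refine (norm_sub_le _ _).trans ?_
          have hqm : q ∈ Finset.univ.filter (fun q => q ≠ p ∧ ¬ Commute (P p) (P q)) := by
            simp [hpq, hc]
          have h2 := hb p hp
          rw [← Finset.add_sum_erase _ _ hqm] at h2 ⊢
          rw [has q hq, zero_add] at h2
          have h3 : ∑ x ∈ (Finset.univ.filter (fun q => q ≠ p ∧ ¬ Commute (P p) (P q))).erase q, a x
            ≤ ∑ x ∈ (Finset.univ.filter (fun q => q ≠ p ∧ ¬ Commute (P p) (P q))).erase q,
              Function.update a q ‖P q φ‖ x := Finset.sum_le_sum fun r _ => hle r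
          simp only [Function.update_self]
          linarith

open Classical in
theorem dl_lemma (P : ι → E →L[ℂ] E) (hP : ∀ p, IsProjector (P p)) (g : ℕ)
    (hg : ∀ p, (Finset.univ.filter (fun q => q ≠ p ∧ ¬ Commute (P p) (P q))).card ≤ g)
    (ψ : E) (l : List ι) (hl : l.Nodup) (hall : ∀ p, p ∈ l) :
    ∑ p, ‖P p ((l.map (fun p => 1 - P p)).prod ψ)‖ ^ 2 ≤
      (g : ℝ) ^ 2 * (‖ψ‖ ^ 2 - ‖(l.map (fun p => 1 - P p)).prod ψ‖ ^ 2) := by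
  obtain ⟨a, ha0, -, hsum, hb⟩ := dl_aux P hP ψ l hl
  rw [← hsum]
  set φ := (l.map (fun p => 1 - P p)).prod ψ
  calc ∑ p, ‖P p φ‖ ^ 2
      ≤ ∑ p, (g : ℝ) * ∑ q ∈ Finset.univ.filter (fun q => q ≠ p ∧ ¬ Commute (P p) (P q)),
          a q ^ 2 := by
        apply Finset.sum_le_sum
        intro p _
        refine (pow_le_pow_left₀ (norm_nonneg _) (hb p (hall p)) 2).trans ?_
        refine sq_sum_le_card_mul_sum_sq.trans ?_
        refine mul_le_mul_of_nonneg_right (by exact_mod_cast hg p) ?_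
        exact Finset.sum_nonneg fun _ _ => sq_nonneg _
    _ = (g : ℝ) * ∑ q, ∑ p ∈ Finset.univ.filter (fun p => p ≠ q ∧ ¬ Commute (P q) (P p)),
          a q ^ 2 := by
        rw [← Finset.mul_sum]
        congr 1
        refine Finset.sum_comm' ?_
        intro p q
        simp only [Finset.mem_univ, Finset.mem_filter, true_and, and_true]
        exact and_congr ne_comm (not_congr ⟨Commute.symm, Commute.symm⟩)
    _ ≤ (g : ℝ) * ∑ q, (g : ℝ) * a q ^ 2 := by
        refine mul_le_mul_of_nonneg_left ?_ (Nat.cast_nonneg _)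
        apply Finset.sum_le_sum
        intro q _
        rw [Finset.sum_const, nsmul_eq_mul]
        exact mul_le_mul_of_nonneg_right (by exact_mod_cast hg q) (sq_nonneg _)
    _ = (g : ℝ) ^ 2 * ∑ q, a q ^ 2 := by
        rw [← Finset.mul_sum]; ring

end DL
/-! ### Chebyshev -/

theorem cheb_growth (x : ℝ) (hx : 0 ≤ x) (m : ℕ) :
    1 + (m : ℝ) ^ 2 * x ≤ (Polynomial.Chebyshev.T ℝ m).eval (1 + x) ∧
    (2 * (m : ℝ) + 1) * x ≤ (Polynomial.Chebyshev.T ℝ ((m : ℤ) + 1)).eval (1 + x)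
      - (Polynomial.Chebyshev.T ℝ m).eval (1 + x) := by
  induction m with
  | zero => simp
  | succ m ih =>
    obtain ⟨h1, h2⟩ := ih
    have h3 : 1 + ((m : ℝ) + 1) ^ 2 * x ≤ (Polynomial.Chebyshev.T ℝ ((m : ℤ) + 1)).eval (1 + x) := by
      nlinarith
    have hr := Polynomial.Chebyshev.T_add_two ℝ (m : ℤ)
    have hr2 := congrArg (Polynomial.eval (1 + x)) hr
    simp only [Polynomial.eval_sub, Polynomial.eval_mul, Polynomial.eval_X,
      Polynomial.eval_ofNat] at hr2
    push_cast
    refine ⟨h3, ?_⟩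
    rw [show (m : ℤ) + 1 + 1 = m + 2 by ring, hr2]
    have h4 : 0 ≤ ((m : ℝ) + 1) ^ 2 * x := by positivity
    nlinarith

theorem cheb_poly (ε : ℝ) (hε : 0 < ε) (m : ℕ) :
    ∃ c : ℕ → ℝ, ∑ j ∈ Finset.range (m + 1), c j = 1 ∧
      ∀ x : ℝ, 0 ≤ x → (1 + ε) * x ≤ 1 →
        |∑ j ∈ Finset.range (m + 1), c j * x ^ j| ≤ 1 / (1 + 2 * (m : ℝ) ^ 2 * ε) := by
  set q : Polynomial ℝ := Polynomial.C (2 * (1 + ε)) * Polynomial.X - Polynomial.C 1 with hq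
  set p : Polynomial ℝ := (Polynomial.Chebyshev.T ℝ m).comp q with hp
  have hqd : q.natDegree ≤ 1 := by
    rw [hq]; compute_degree
  have hd : p.natDegree < m + 1 := by
    have h1 : p.natDegree ≤ (Polynomial.Chebyshev.T ℝ m).natDegree * q.natDegree :=
      Polynomial.natDegree_comp_le
    rw [Polynomial.Chebyshev.natDegree_T] at h1
    simp only [Int.natAbs_natCast] at h1
    nlinarith
  have hev : ∀ x, p.eval x = (Polynomial.Chebyshev.T ℝ m).eval (2 * (1 + ε) * x - 1) := by
    intro x; simp [hp, hq, Polynomial.eval_comp]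
  have hsum : ∀ x, p.eval x = ∑ j ∈ Finset.range (m + 1), p.coeff j * x ^ j := fun x =>
    Polynomial.eval_eq_sum_range' hd x
  have h1 : 1 + 2 * (m : ℝ) ^ 2 * ε ≤ p.eval 1 := by
    rw [hev]
    have := (cheb_growth (2 * ε) (by positivity) m).1
    rw [show 2 * (1 + ε) * 1 - 1 = 1 + 2 * ε by ring]
    linarith
  have hpos : 0 < 1 + 2 * (m : ℝ) ^ 2 * ε := by positivity
  have hp1 : 0 < p.eval 1 := by linarith
  refine ⟨fun j => p.coeff j / p.eval 1, ?_, ?_⟩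
  · rw [← Finset.sum_div]
    have := hsum 1
    simp only [one_pow, mul_one] at this
    rw [← this, div_self hp1.ne']
  · intro x hx0 hx1
    have : ∑ j ∈ Finset.range (m + 1), p.coeff j / p.eval 1 * x ^ j = p.eval x / p.eval 1 := by
      rw [hsum x, Finset.sum_div]
      exact Finset.sum_congr rfl fun j _ => by ring
    rw [this, abs_div, abs_of_pos hp1]
    apply div_le_div₀ zero_le_one _ hpos h1
    rw [hev]
    apply Polynomial.Chebyshev.abs_eval_T_real_le_one
    rw [abs_le]; constructor <;> nlinarith

/-! ### Spectral gaps -/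

/-- all positive eigenvalues of `T` are at least `γ` -/
def Gapped (T : E →L[ℂ] E) (γ : ℝ) : Prop :=
  ∀ c : ℝ, 0 < c → ∀ v : E, v ≠ 0 → T v = (c : ℂ) • v → γ ≤ c

/-- symmetric and positive, in elementary form -/
def SymPos (T : E →L[ℂ] E) : Prop :=
  (∀ x y, inner ℂ (T x) y = inner ℂ x (T y)) ∧ ∀ x, 0 ≤ (inner ℂ x (T x)).re

theorem spectral_form (T : E →L[ℂ] E) (hT : ∀ x y, inner ℂ (T x) y = inner ℂ x (T y)) :
    ∃ (b : OrthonormalBasis (Fin (Module.finrank ℂ E)) ℂ E) (μ : Fin (Module.finrank ℂ E) → ℝ),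
      ∀ i, T (b i) = (μ i : ℂ) • b i := by
  have hs : (T : E →ₗ[ℂ] E).IsSymmetric := hT
  exact ⟨hs.eigenvectorBasis rfl, hs.eigenvalues rfl, fun i => hs.apply_eigenvectorBasis rfl i⟩

theorem gapped_eig {T : E →L[ℂ] E} (hT : SymPos T) {γ : ℝ} (hg : Gapped T γ) {v : E} {c : ℝ}
    (hv : v ≠ 0) (h : T v = (c : ℂ) • v) : c = 0 ∨ (0 < c ∧ γ ≤ c) := by
  have h1 := hT.2 v
  rw [h, inner_smul_right, inner_self_eq_norm_sq_to_K] at h1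
  have h2 : 0 ≤ c * ‖v‖ ^ 2 := by
    have : ((c : ℂ) * ((‖v‖ : ℝ) : ℂ) ^ 2).re = c * ‖v‖ ^ 2 := by norm_cast
    rw [← this]; exact h1
  have h3 : 0 < ‖v‖ ^ 2 := by positivity
  have h4 : 0 ≤ c := nonneg_of_mul_nonneg_left h2 h3
  rcases h4.eq_or_lt with h5 | h5
  · exact Or.inl h5.symm
  · exact Or.inr ⟨h5, hg c h5 v hv h⟩

theorem form_expand (T : E →L[ℂ] E) (hT : ∀ x y, inner ℂ (T x) y = inner ℂ x (T y))
    {κ : Type*} [Fintype κ] (b : OrthonormalBasis κ ℂ E) (μ : κ → ℝ)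
    (h : ∀ i, T (b i) = (μ i : ℂ) • b i) (x : E) :
    (∀ i, inner ℂ (b i) (T x) = (μ i : ℂ) * inner ℂ (b i) x) ∧
    (inner ℂ x (T x)).re = ∑ i, μ i * ‖inner ℂ (b i) x‖ ^ 2 := by
  have h1 : ∀ i, inner ℂ (b i) (T x) = (μ i : ℂ) * inner ℂ (b i) x := by
    intro i
    rw [← hT, h, inner_smul_left]; simp
  refine ⟨h1, ?_⟩
  rw [← b.sum_inner_mul_inner, Complex.re_sum]
  apply Finset.sum_congr rfl
  intro i _
  rw [h1, ← inner_conj_symm x (b i)]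
  have : (starRingEnd ℂ) (inner ℂ (b i) x) * ((μ i : ℂ) * inner ℂ (b i) x)
      = (μ i : ℂ) * ((starRingEnd ℂ) (inner ℂ (b i) x) * inner ℂ (b i) x) := by ring
  rw [this, RCLike.conj_mul]
  norm_cast
  rw [Complex.re_ofReal_mul]
  rfl

theorem gapped_sq {T : E →L[ℂ] E} (hT : SymPos T) {γ : ℝ} (hg : Gapped T γ) (x : E) :
    γ * (inner ℂ x (T x)).re ≤ ‖T x‖ ^ 2 := by
  obtain ⟨b, μ, h⟩ := spectral_form T hT.1
  obtain ⟨h1, h2⟩ := form_expand T hT.1 b μ h x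
  rw [h2, ← b.sum_sq_norm_inner_right (T x), Finset.mul_sum]
  apply Finset.sum_le_sum
  intro i _
  rw [h1, norm_mul, mul_pow, ← mul_assoc]
  refine mul_le_mul_of_nonneg_right ?_ (sq_nonneg _)
  have : ‖(μ i : ℂ)‖ ^ 2 = μ i ^ 2 := by simp
  rw [this]
  rcases gapped_eig hT hg (b.orthonormal.ne_zero i) (h i) with h3 | h3
  · simp [h3]
  · nlinarith

theorem gapped_perp {T : E →L[ℂ] E} (hT : SymPos T) {γ : ℝ} (hg : Gapped T γ) (x : E)
    (hx : ∀ z, T z = 0 → inner ℂ z x = 0) :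
    γ * ‖x‖ ^ 2 ≤ (inner ℂ x (T x)).re := by
  obtain ⟨b, μ, h⟩ := spectral_form T hT.1
  obtain ⟨h1, h2⟩ := form_expand T hT.1 b μ h x
  rw [h2, ← b.sum_sq_norm_inner_right x, Finset.mul_sum]
  apply Finset.sum_le_sum
  intro i _
  rcases gapped_eig hT hg (b.orthonormal.ne_zero i) (h i) with h3 | h3
  · have : inner ℂ (b i) x = 0 := hx _ (by rw [h, h3]; simp)
    simp [this]
  · exact mul_le_mul_of_nonneg_right h3.2 (sq_nonneg _)

theorem gapped_of_sq {T : E →L[ℂ] E} {γ : ℝ}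
    (h : ∀ x, γ * (inner ℂ x (T x)).re ≤ ‖T x‖ ^ 2) : Gapped T γ := by
  intro c hc v hv hT
  have h1 := h v
  rw [hT, inner_smul_right, inner_self_eq_norm_sq_to_K, norm_smul, mul_pow] at h1
  have h2 : ((c : ℂ) * ((‖v‖ : ℝ) : ℂ) ^ 2).re = c * ‖v‖ ^ 2 := by norm_cast
  have h3 : ‖(c : ℂ)‖ ^ 2 = c ^ 2 := by simp
  rw [h3] at h1
  have h4 : γ * (c * ‖v‖ ^ 2) ≤ c ^ 2 * ‖v‖ ^ 2 := by rw [← h2]; exact h1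
  have h5 : 0 < c * ‖v‖ ^ 2 := by positivity
  have h6 : γ * (c * ‖v‖ ^ 2) ≤ c * (c * ‖v‖ ^ 2) := by linarith
  exact le_of_mul_le_mul_right h6 h5

theorem gapped_sum {κ : Type*} (s : Finset κ) (T : κ → E →L[ℂ] E) (γ : ℝ)
    (hT : ∀ k ∈ s, SymPos (T k)) (hg : ∀ k ∈ s, Gapped (T k) γ)
    (hc : ∀ k ∈ s, ∀ l ∈ s, k ≠ l → ∀ x, 0 ≤ (inner ℂ (T k x) (T l x)).re) :
    Gapped (∑ k ∈ s, T k) γ := by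
  apply gapped_of_sq
  intro x
  rw [sum_apply]
  have h1 : ‖∑ k ∈ s, T k x‖ ^ 2 = ∑ k ∈ s, ∑ l ∈ s, (inner ℂ (T k x) (T l x)).re := by
    have : ‖∑ k ∈ s, T k x‖ ^ 2 = (inner ℂ (∑ k ∈ s, T k x) (∑ k ∈ s, T k x)).re :=
      (inner_self_eq_norm_sq (𝕜 := ℂ) _).symm
    rw [this, sum_inner, Complex.re_sum]
    apply Finset.sum_congr rfl
    intro k _
    rw [inner_sum, Complex.re_sum]
  rw [h1, inner_sum, Complex.re_sum, Finset.mul_sum]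
  apply Finset.sum_le_sum
  intro k hk
  refine (gapped_sq (hT k hk) (hg k hk) x).trans ?_
  have h2 : ‖T k x‖ ^ 2 = (inner ℂ (T k x) (T k x)).re :=
    (inner_self_eq_norm_sq (𝕜 := ℂ) _).symm
  rw [h2]
  refine Finset.single_le_sum (f := fun l => (inner ℂ (T k x) (T l x)).re) ?_ hk
  intro l hl
  by_cases hkl : k = l
  · subst hkl; exact inner_self_nonneg (𝕜 := ℂ)
  · exact hc k hk l hl hkl x
/-! ### Sums of projectors -/

section Abstract

variable {ι : Type*} [Fintype ι]

theorem sum_proj_re (P : ι → E →L[ℂ] E) (hP : ∀ p, IsProjector (P p)) (X : Finset ι) (x : E) :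
    (inner ℂ x ((∑ p ∈ X, P p) x)).re = ∑ p ∈ X, ‖P p x‖ ^ 2 := by
  rw [sum_apply, inner_sum, Complex.re_sum]
  exact Finset.sum_congr rfl fun p _ => proj_re (hP p) x

theorem sum_proj_symPos (P : ι → E →L[ℂ] E) (hP : ∀ p, IsProjector (P p)) (X : Finset ι) :
    SymPos (∑ p ∈ X, P p) := by
  refine ⟨fun x y => ?_, fun x => ?_⟩
  · rw [sum_apply, sum_apply, inner_sum, sum_inner]
    exact Finset.sum_congr rfl fun p _ => proj_inner (hP p) x y
  · rw [sum_proj_re P hP]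
    exact Finset.sum_nonneg fun _ _ => sq_nonneg _

theorem sum_proj_ker (P : ι → E →L[ℂ] E) (hP : ∀ p, IsProjector (P p)) (X : Finset ι) (x : E) :
    (∑ p ∈ X, P p) x = 0 ↔ ∀ p ∈ X, P p x = 0 := by
  constructor
  · intro h
    have h1 := sum_proj_re P hP X x
    rw [h, inner_zero_right] at h1
    have h2 : ∑ p ∈ X, ‖P p x‖ ^ 2 = 0 := by rw [← h1]; rfl
    rw [Finset.sum_eq_zero_iff_of_nonneg (fun _ _ => sq_nonneg _)] at h2
    intro p hp
    have := h2 p hp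
    simpa using this
  · intro h
    rw [sum_apply]
    exact Finset.sum_eq_zero h

/-! ### The light-cone argument -/

/-- `Z` absorbs all projectors deeper than `k` -/
def LInv (P : ι → E →L[ℂ] E) (f : ι → ℕ) (k : ℕ) (Z : E →L[ℂ] E) : Prop :=
  ∀ p, k < f p → Z * P p = 0

/-- `W` can be absorbed between `Z` and `B` at the expense of `a` units of depth -/
def Adv (P : ι → E →L[ℂ] E) (f : ι → ℕ) (N : ℕ) (B W : E →L[ℂ] E) (a : ℕ) : Prop :=
  ∀ Z k, k + a ≤ N → LInv P f k Z → LInv P f (k + a) (Z * W) ∧ Z * W * B = Z * B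

theorem adv_one (P : ι → E →L[ℂ] E) (f : ι → ℕ) (N : ℕ) (B : E →L[ℂ] E) : Adv P f N B 1 0 := by
  intro Z k _ h
  simpa using h

theorem adv_mul {P : ι → E →L[ℂ] E} {f : ι → ℕ} {N : ℕ} {B W W' : E →L[ℂ] E} {a a' : ℕ}
    (h : Adv P f N B W a) (h' : Adv P f N B W' a') : Adv P f N B (W * W') (a + a') := by
  intro Z k hk hZ
  obtain ⟨h1, h2⟩ := h Z k (by omega) hZ
  obtain ⟨h3, h4⟩ := h' (Z * W) (k + a) (by omega) h1
  rw [← mul_assoc, ← add_assoc]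
  exact ⟨h3, h4.trans h2⟩

theorem adv_pow {P : ι → E →L[ℂ] E} {f : ι → ℕ} {N : ℕ} {B W : E →L[ℂ] E} {a : ℕ}
    (h : Adv P f N B W a) (j : ℕ) : Adv P f N B (W ^ j) (j * a) := by
  induction j with
  | zero => simpa using adv_one P f N B
  | succ j ih =>
    rw [pow_succ, Nat.succ_mul]
    exact adv_mul ih h

theorem adv_layer (P : ι → E →L[ℂ] E) (f : ι → ℕ) (N : ℕ) (B : E →L[ℂ] E)
    (hf : ∀ p q, ¬ Commute (P p) (P q) → f p ≤ f q + 1)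
    (hB : ∀ q, f q < N → P q * B = 0) (l : List ι)
    (hl : ∀ p ∈ l, ∀ q ∈ l, Commute (P p) (P q)) :
    Adv P f N B (l.map (fun p => 1 - P p)).prod 1 := by
  have key : ∀ (s : List ι), (∀ p ∈ s, p ∈ l) → ∀ (Z : E →L[ℂ] E) (k : ℕ), k + 1 ≤ N →
      LInv P f (k + 1) Z → (∀ p ∈ l, k < f p → Z * P p = 0) →
      LInv P f (k + 1) (Z * (s.map (fun p => 1 - P p)).prod) ∧
        Z * (s.map (fun p => 1 - P p)).prod * B = Z * B := by
    intro s
    induction s with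
    | nil => intro _ Z k _ h _; simpa using h
    | cons q s ih =>
      intro hs Z k hk hZ hZl
      have hs' : ∀ p ∈ s, p ∈ l := fun p hp => hs p (List.mem_cons_of_mem _ hp)
      have hq : q ∈ l := hs q (List.mem_cons_self)
      rw [List.map_cons, List.prod_cons, ← mul_assoc]
      by_cases hfq : k < f q
      · have h0 : Z * (1 - P q) = Z := by rw [mul_sub, mul_one, hZl q hq hfq, sub_zero]
        rw [h0]
        exact ih hs' Z k hk hZ hZl
      · have hcom : ∀ p, Z * P p = 0 → Commute (P p) (P q) → Z * (1 - P q) * P p = 0 := by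
          intro p hp hc
          rw [mul_assoc, sub_mul, one_mul, ← hc.eq, mul_sub, ← mul_assoc, hp, zero_mul, sub_zero]
        have h1 : LInv P f (k + 1) (Z * (1 - P q)) := by
          intro p hp
          refine hcom p (hZ p hp) ?_
          by_contra hc
          have := hf p q hc
          omega
        have h2 : ∀ p ∈ l, k < f p → Z * (1 - P q) * P p = 0 := fun p hp hfp =>
          hcom p (hZl p hp hfp) (hl p hp q hq)
        obtain ⟨h3, h4⟩ := ih hs' (Z * (1 - P q)) k hk h1 h2
        refine ⟨h3, h4.trans ?_⟩
        rw [mul_assoc, sub_mul, hB q (by omega), one_mul, sub_zero]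
  intro Z k hk hZ
  exact key l (fun _ h => h) Z k hk (fun p hp => hZ p (by omega)) (fun p _ hp => hZ p hp)

theorem adv_words (P : ι → E →L[ℂ] E) (f : ι → ℕ) (N : ℕ) (B : E →L[ℂ] E)
    (hf : ∀ p q, ¬ Commute (P p) (P q) → f p ≤ f q + 1)
    (hB : ∀ q, f q < N → P q * B = 0) (w : List (List ι))
    (hl : ∀ l ∈ w, ∀ p ∈ l, ∀ q ∈ l, Commute (P p) (P q)) :
    Adv P f N B (w.flatten.map (fun p => 1 - P p)).prod w.length := by
  induction w with
  | nil => simpa using adv_one P f N B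
  | cons l w ih =>
    rw [List.flatten_cons, List.map_append, List.prod_append, List.length_cons, add_comm]
    refine adv_mul (adv_layer P f N B hf hB l (hl l List.mem_cons_self)) (ih ?_)
    exact fun l' hl' => hl l' (List.mem_cons_of_mem _ hl')

theorem prod_adj (P : ι → E →L[ℂ] E) (hP : ∀ p, IsProjector (P p)) (l : List ι) (x y : E) :
    inner ℂ ((l.reverse.map (fun p => 1 - P p)).prod x) y =
      inner ℂ x ((l.map (fun p => 1 - P p)).prod y) := by
  induction l generalizing x with
  | nil => simp
  | cons q l ih =>
    simp only [List.reverse_cons, List.map_append, List.map_cons, List.map_nil, List.prod_append,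
      List.prod_cons, List.prod_nil, mul_one, mul_apply_eq_comp]
    rw [ih]
    simp only [ContinuousLinearMap.sub_apply, ContinuousLinearMap.one_apply, inner_sub_left,
      inner_sub_right, proj_inner (hP q)]

theorem prod_fix (P : ι → E →L[ℂ] E) (l : List ι) (z : E) (hz : ∀ p, P p z = 0) :
    (l.map (fun p => 1 - P p)).prod z = z := by
  induction l with
  | nil => simp
  | cons q l ih => simp [ih, hz]

/-- the polynomial approximation argument -/
theorem overlap_bound (P : ι → E →L[ℂ] E) (D D' : E →L[ℂ] E) (ε : ℝ) (hε : 0 < ε) (m : ℕ)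
    (hadj : ∀ x y, inner ℂ (D' x) y = inner ℂ x (D y))
    (hD : ∀ z, (∀ p, P p z = 0) → D z = z) (hD' : ∀ z, (∀ p, P p z = 0) → D' z = z)
    (hDL : ∀ x, (∀ z, (∀ p, P p z = 0) → inner ℂ z x = 0) → (1 + ε) * ‖D x‖ ^ 2 ≤ ‖x‖ ^ 2)
    (u v : E) (hv : ∀ z, (∀ p, P p z = 0) → inner ℂ z v = 0)
    (huv : ∀ j ≤ m, inner ℂ u (((D' * D) ^ j) v) = inner ℂ u v) :
    ‖inner ℂ u v‖ ≤ 1 / (1 + 2 * (m : ℝ) ^ 2 * ε) * (‖u‖ * ‖v‖) := by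
  set K := D' * D with hK
  have hKre : ∀ x, inner ℂ x (K x) = inner ℂ (D x) (D x) := by
    intro x
    rw [← inner_conj_symm, hK, mul_apply_eq_comp, hadj, inner_conj_symm]
  have hKs : ∀ x y, inner ℂ (K x) y = inner ℂ x (K y) := by
    intro x y
    rw [hK, mul_apply_eq_comp, hadj, ← inner_conj_symm x, mul_apply_eq_comp,
      hadj, inner_conj_symm]
  obtain ⟨b, μ, hb⟩ := spectral_form K hKs
  have hKn : ∀ x, (inner ℂ x (K x)).re = ‖D x‖ ^ 2 := by
    intro x
    rw [hKre]; exact inner_self_eq_norm_sq (𝕜 := ℂ) _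
  have hμ0 : ∀ i, 0 ≤ μ i := by
    intro i
    have h1 := hKn (b i)
    rw [hb, inner_smul_right, inner_self_eq_norm_sq_to_K, b.orthonormal.1 i] at h1
    have : μ i = ‖D (b i)‖ ^ 2 := by rw [← h1]; simp
    rw [this]; positivity
  set G : Submodule ℂ E := ⨅ p, LinearMap.ker (P p : E →ₗ[ℂ] E) with hG
  have hGm : ∀ z, z ∈ G ↔ ∀ p, P p z = 0 := by
    intro z; simp [hG, Submodule.mem_iInf]
  have hμ1 : ∀ i, inner ℂ (b i) v = 0 ∨ (1 + ε) * μ i ≤ 1 := by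
    intro i
    by_cases h1 : (1 + ε) * μ i ≤ 1
    · exact Or.inr h1
    left
    push Not at h1
    set y := G.starProjection (b i) with hy
    have hyG : ∀ p, P p y = 0 := (hGm y).1 (G.starProjection_apply_mem _)
    set z := b i - y with hz
    have hzG : ∀ w, (∀ p, P p w = 0) → inner ℂ w z = 0 := by
      intro w hw
      have := G.starProjection_inner_eq_zero (b i) w ((hGm w).2 hw)
      rw [← inner_conj_symm, hz, hy, this]; simp
    have h2 := hDL z hzG
    have h3 : K z = (μ i : ℂ) • z + ((μ i : ℂ) - 1) • y := by
      have : K y = y := by rw [hK, mul_apply_eq_comp, hD y hyG, hD' y hyG]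
      rw [hz, map_sub, hb, this, sub_smul, smul_sub, one_smul]; abel
    have h4 : inner ℂ z y = 0 := by
      rw [← inner_conj_symm, hzG y hyG]; simp
    have h5 : (inner ℂ z (K z)).re = μ i * ‖z‖ ^ 2 := by
      rw [h3, inner_add_right, inner_smul_right, inner_smul_right, h4, mul_zero, add_zero,
        inner_self_eq_norm_sq_to_K, Complex.re_ofReal_mul]
      congr 1
      norm_cast
    rw [← hKn, h5] at h2
    have h6 : ‖z‖ ^ 2 = 0 := by
      by_contra hne
      have : 0 < ‖z‖ ^ 2 := lt_of_le_of_ne (sq_nonneg _) (Ne.symm hne)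
      nlinarith
    have h7 : z = 0 := by simpa using h6
    have h8 : b i = y := by rw [hz] at h7; exact sub_eq_zero.mp h7
    rw [h8]
    exact hv y hyG
  obtain ⟨c, hc1, hc2⟩ := cheb_poly ε hε m
  set κ := 1 / (1 + 2 * (m : ℝ) ^ 2 * ε) with hκ
  have hκ0 : 0 ≤ κ := by positivity
  set w := ∑ j ∈ Finset.range (m + 1), (c j : ℂ) • ((K ^ j) v) with hw
  have hbK : ∀ i j, inner ℂ (b i) ((K ^ j) v) = ((μ i ^ j : ℝ) : ℂ) * inner ℂ (b i) v := by
    intro i j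
    induction j with
    | zero => simp
    | succ j ih =>
      rw [pow_succ', mul_apply_eq_comp, (form_expand K hKs b μ hb _).1, ih]
      push_cast; ring
  have hbw : ∀ i, ‖inner ℂ (b i) w‖ ≤ κ * ‖inner ℂ (b i) v‖ := by
    intro i
    have h1 : inner ℂ (b i) w =
        ((∑ j ∈ Finset.range (m + 1), c j * μ i ^ j : ℝ) : ℂ) * inner ℂ (b i) v := by
      rw [hw, inner_sum, Complex.ofReal_sum, Finset.sum_mul]
      apply Finset.sum_congr rfl
      intro j _
      rw [inner_smul_right, hbK]; push_cast; ring
    rw [h1, norm_mul]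
    rcases hμ1 i with h2 | h2
    · rw [h2]; simp
    · refine mul_le_mul_of_nonneg_right ?_ (norm_nonneg _)
      rw [Complex.norm_real]
      exact hc2 (μ i) (hμ0 i) h2
  have hwn : ‖w‖ ≤ κ * ‖v‖ := by
    refine le_of_sq_le_sq ?_ (by positivity)
    rw [mul_pow, ← b.sum_sq_norm_inner_right w, ← b.sum_sq_norm_inner_right v, Finset.mul_sum]
    apply Finset.sum_le_sum
    intro i _
    rw [← mul_pow]
    exact pow_le_pow_left₀ (norm_nonneg _) (hbw i) 2
  have huw : inner ℂ u w = inner ℂ u v := by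
    rw [hw, inner_sum]
    have : ∀ j ∈ Finset.range (m + 1), inner ℂ u ((c j : ℂ) • ((K ^ j) v)) =
        (c j : ℂ) * inner ℂ u v := by
      intro j hj
      rw [inner_smul_right, huv j (by simpa [Nat.lt_succ_iff] using hj)]
    rw [Finset.sum_congr rfl this, ← Finset.sum_mul]
    have h2 : ∑ j ∈ Finset.range (m + 1), (c j : ℂ) = 1 := by exact_mod_cast hc1
    rw [h2, one_mul]
  rw [← huw]
  calc ‖inner ℂ u w‖ ≤ ‖u‖ * ‖w‖ := norm_inner_le_norm _ _
    _ ≤ ‖u‖ * (κ * ‖v‖) := mul_le_mul_of_nonneg_left hwn (norm_nonneg _)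
    _ = κ * (‖u‖ * ‖v‖) := by ring

theorem ker_proj (P : ι → E →L[ℂ] E) (hP : ∀ p, IsProjector (P p)) (X : Finset ι) (γt : ℝ)
    (hg : Gapped (∑ p ∈ X, P p) γt) :
    ∃ A : E →L[ℂ] E, IsProjector A ∧ (∀ p ∈ X, P p * A = 0) ∧ (∀ p ∈ X, A * P p = 0) ∧
      (∀ z, (∀ p, P p z = 0) → A z = z) ∧
      ∀ x, γt * ‖x - A x‖ ^ 2 ≤ ∑ p, ‖P p x‖ ^ 2 := by
  set T := ∑ p ∈ X, P p with hT
  set U : Submodule ℂ E := LinearMap.ker (T : E →ₗ[ℂ] E) with hU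
  have hUm : ∀ z, z ∈ U ↔ ∀ p ∈ X, P p z = 0 := by
    intro z
    rw [← sum_proj_ker P hP X z, hU, LinearMap.mem_ker]
    rfl
  set A := U.starProjection with hA
  have hAp : IsProjector A := ⟨isSelfAdjoint_starProjection U, U.isIdempotentElem_starProjection⟩
  have hPA : ∀ p ∈ X, P p * A = 0 := by
    intro p hp
    ext x
    exact (hUm _).1 (U.starProjection_apply_mem x) p hp
  refine ⟨A, hAp, hPA, ?_, ?_, ?_⟩
  · intro p hp
    have h1 := congrArg star (hPA p hp)
    rw [star_mul, star_zero] at h1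
    rw [show star A = A from hAp.1, show star (P p) = P p from (hP p).1] at h1
    exact h1
  · intro z hz
    exact Submodule.starProjection_eq_self_iff.2 ((hUm z).2 fun p _ => hz p)
  · intro x
    have h1 := gapped_perp (sum_proj_symPos P hP X) hg (x - A x) (by
      intro z hz
      have hz' : z ∈ U := (hUm z).2 ((sum_proj_ker P hP X z).1 hz)
      rw [← inner_conj_symm, U.starProjection_inner_eq_zero x z hz']; simp)
    refine h1.trans ?_
    rw [sum_proj_re P hP X]
    have : ∀ p ∈ X, ‖P p (x - A x)‖ ^ 2 = ‖P p x‖ ^ 2 := by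
      intro p hp
      have : P p (A x) = 0 := (hUm _).1 (U.starProjection_apply_mem x) p hp
      rw [map_sub, this, sub_zero]
    rw [Finset.sum_congr rfl this]
    exact Finset.sum_le_sum_of_subset_of_nonneg (Finset.subset_univ _) fun _ _ _ => sq_nonneg _

open Classical in
theorem main_abs (P : ι → E →L[ℂ] E) (hP : ∀ p, IsProjector (P p)) (g L m N : ℕ)
    (hg0 : 0 < g) (hm : 0 < m) (hN : m * (L + L) ≤ N)
    (hg : ∀ p, (Finset.univ.filter (fun q => q ≠ p ∧ ¬ Commute (P p) (P q))).card ≤ g)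
    (layer : ι → Fin L) (hlayer : ∀ p q, layer p = layer q → Commute (P p) (P q))
    (X Y : Finset ι) (f : ι → ℕ)
    (hX : ∀ p, 0 < f p → p ∈ X ∨ P p = 0) (hY : ∀ p, f p < N → p ∈ Y ∨ P p = 0)
    (hf : ∀ p q, ¬ Commute (P p) (P q) → f p ≤ f q + 1)
    (γ γt : ℝ) (hγ : 0 < γ) (hγt : 0 ≤ γt)
    (hgap : Gapped (∑ p, P p) γ) (hXg : Gapped (∑ p ∈ X, P p) γt)
    (hYg : Gapped (∑ p ∈ Y, P p) γt)
    (ψ : E) (hψ0 : ψ ≠ 0) (hψ : (∑ p, P p) ψ = (γ : ℂ) • ψ) :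
    γt ≤ 2 * γ + (g : ℝ) ^ 2 / (m : ℝ) ^ 2 := by
  obtain ⟨A, hA, -, hAP, hAG, hAγ⟩ := ker_proj P hP X γt hXg
  obtain ⟨B, hB, hPB, -, hBG, hBγ⟩ := ker_proj P hP Y γt hYg
  set ε : ℝ := γ / (g : ℝ) ^ 2 with hε
  have hgR : (0 : ℝ) < g := by exact_mod_cast hg0
  have hmR : (0 : ℝ) < m := by exact_mod_cast hm
  have hε0 : 0 < ε := by positivity
  -- the words
  set ww : List (List ι) := (List.finRange L).map
    (fun α => Finset.univ.toList.filter (fun p => layer p = α)) with hww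
  have hwwlen : ww.length = L := by simp [hww]
  have hwwc : ∀ l ∈ ww, ∀ p ∈ l, ∀ q ∈ l, Commute (P p) (P q) := by
    intro l hl p hp q hq
    simp only [hww, List.mem_map] at hl
    obtain ⟨α, -, rfl⟩ := hl
    simp only [List.mem_filter, decide_eq_true_eq] at hp hq
    exact hlayer p q (hp.2.trans hq.2.symm)
  set l := ww.flatten with hl
  have hlall : ∀ p, p ∈ l := by
    intro p
    simp only [hl, List.mem_flatten, hww, List.mem_map]
    exact ⟨_, ⟨layer p, List.mem_finRange _, rfl⟩, by simp⟩
  have hlnd : l.Nodup := by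
    rw [hl, List.nodup_flatten]
    refine ⟨?_, ?_⟩
    · intro l' hl'
      simp only [hww, List.mem_map] at hl'
      obtain ⟨α, -, rfl⟩ := hl'
      exact (Finset.nodup_toList _).filter _
    · rw [hww, List.pairwise_map]
      refine (List.nodup_finRange L).imp ?_
      intro α β hαβ p hp hp'
      simp only [List.mem_filter, decide_eq_true_eq] at hp hp'
      exact hαβ (hp.2.symm.trans hp'.2)
  set D := (l.map (fun p => 1 - P p)).prod with hD
  set D' := (l.reverse.map (fun p => 1 - P p)).prod with hD'
  have hadj : ∀ x y, inner ℂ (D' x) y = inner ℂ x (D y) := prod_adj P hP l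
  -- light cone
  have hPB' : ∀ q, f q < N → P q * B = 0 := by
    intro q hq
    rcases hY q hq with h | h
    · exact hPB q h
    · rw [h, zero_mul]
  have hadvD : Adv P f N B D L := by
    have := adv_words P f N B hf hPB' ww hwwc
    rwa [hwwlen] at this
  have hadvD' : Adv P f N B D' L := by
    have := adv_words P f N B hf hPB' (ww.map List.reverse).reverse (by
      intro l' hl' p hp q hq
      simp only [List.mem_reverse, List.mem_map] at hl'
      obtain ⟨l'', hl'', rfl⟩ := hl'
      exact hwwc l'' hl'' p (List.mem_reverse.1 hp) q (List.mem_reverse.1 hq))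
    rw [← List.reverse_flatten, List.length_reverse, List.length_map, hwwlen] at this
    exact this
  have hAK : ∀ j ≤ m, A * (D' * D) ^ j * B = A * B := by
    intro j hj
    refine (adv_pow (adv_mul hadvD' hadvD) j A 0 ?_ ?_).2
    · have : j * (L + L) ≤ m * (L + L) := Nat.mul_le_mul_right _ hj
      omega
    · intro p hp
      rcases hX p hp with h | h
      · exact hAP p h
      · rw [h, mul_zero]
  -- detectability lemma
  have hG0 : ∀ z, (∑ p, P p) z = 0 → ∀ p, P p z = 0 := fun z hz p =>
    (sum_proj_ker P hP Finset.univ z).1 hz p (Finset.mem_univ p)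
  have hDL : ∀ x, (∀ z, (∀ p, P p z = 0) → inner ℂ z x = 0) →
      (1 + ε) * ‖D x‖ ^ 2 ≤ ‖x‖ ^ 2 := by
    intro x hx
    have h1 := dl_lemma P hP g hg x l hlnd hlall
    have h2 : γ * ‖D x‖ ^ 2 ≤ ∑ p, ‖P p (D x)‖ ^ 2 := by
      rw [← sum_proj_re P hP]
      refine gapped_perp (sum_proj_symPos P hP _) hgap _ ?_
      intro z hz
      rw [← hadj, hD', prod_fix P l.reverse z (hG0 z hz)]
      exact hx z (hG0 z hz)
    have h3 : γ * ‖D x‖ ^ 2 ≤ (g : ℝ) ^ 2 * (‖x‖ ^ 2 - ‖D x‖ ^ 2) := h2.trans h1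
    have h4 : ε * ‖D x‖ ^ 2 ≤ ‖x‖ ^ 2 - ‖D x‖ ^ 2 := by
      rw [hε, div_mul_eq_mul_div, div_le_iff₀ (by positivity)]
      linarith
    linarith
  -- the trial state
  have hψG : ∀ z, (∀ p, P p z = 0) → inner ℂ z ψ = 0 := by
    intro z hz
    have h1 := (sum_proj_symPos P hP Finset.univ).1 z ψ
    rw [(sum_proj_ker P hP Finset.univ z).2 (fun p _ => hz p), hψ, inner_zero_left,
      inner_smul_right] at h1
    have : (γ : ℂ) ≠ 0 := by exact_mod_cast hγ.ne'
    rcases mul_eq_zero.1 h1.symm with h | h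
    · exact absurd h this
    · exact h
  set u := A ψ with hu
  set v := B ψ with hv
  have hvG : ∀ z, (∀ p, P p z = 0) → inner ℂ z v = 0 := by
    intro z hz
    rw [hv, ← proj_inner hB, hBG z hz]
    exact hψG z hz
  have huA : A u = u := proj_idem hA ψ
  have hvB : B v = v := proj_idem hB ψ
  have huv : ∀ j ≤ m, inner ℂ u (((D' * D) ^ j) v) = inner ℂ u v := by
    intro j hj
    have h1 := congrArg (fun T : E →L[ℂ] E => inner ℂ u (T v)) (hAK j hj)
    simp only [mul_apply_eq_comp] at h1
    rw [← proj_inner hA, ← proj_inner hA, huA, hvB] at h1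
    exact h1
  have hov := overlap_bound P D D' ε hε0 m hadj (fun z hz => prod_fix P _ z hz)
    (fun z hz => prod_fix P _ z hz) hDL u v hvG huv
  set κ := 1 / (1 + 2 * (m : ℝ) ^ 2 * ε) with hκ
  have hκ0 : 0 ≤ κ := by positivity
  -- energy
  have hen : ∑ p, ‖P p ψ‖ ^ 2 = γ * ‖ψ‖ ^ 2 := by
    rw [← sum_proj_re P hP, hψ, inner_smul_right, Complex.re_ofReal_mul]
    congr 1
    exact inner_self_eq_norm_sq (𝕜 := ℂ) _
  have h1 := hAγ ψ
  have h2 := hBγ ψ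
  rw [hen, proj_pyth hA] at h1
  rw [hen, proj_pyth hB] at h2
  rw [← hu] at h1
  rw [← hv] at h2
  -- Cauchy-Schwarz
  have hs1 : ‖u‖ ^ 2 + ‖v‖ ^ 2 ≤ ‖ψ‖ * ‖u + v‖ := by
    have h3 : (inner ℂ ψ (u + v)).re = ‖u‖ ^ 2 + ‖v‖ ^ 2 := by
      rw [inner_add_right, Complex.add_re, hu, hv, proj_re hA, proj_re hB]
    rw [← h3]
    exact (Complex.re_le_norm _).trans (norm_inner_le_norm _ _)
  have hs2 : ‖u + v‖ ^ 2 ≤ (‖u‖ ^ 2 + ‖v‖ ^ 2) * (1 + κ) := by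
    have h3 := @norm_add_sq ℂ E _ _ _ u v
    have h4 : RCLike.re (inner ℂ u v) ≤ ‖inner ℂ u v‖ := Complex.re_le_norm _
    have h5 : 2 * (‖u‖ * ‖v‖) ≤ ‖u‖ ^ 2 + ‖v‖ ^ 2 := by nlinarith [sq_nonneg (‖u‖ - ‖v‖)]
    have h6 : κ * (2 * (‖u‖ * ‖v‖)) ≤ κ * (‖u‖ ^ 2 + ‖v‖ ^ 2) :=
      mul_le_mul_of_nonneg_left h5 hκ0
    rw [h3]
    linarith
  set s := ‖u‖ ^ 2 + ‖v‖ ^ 2 with hs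
  have hs0 : 0 ≤ s := by positivity
  have hψn : 0 < ‖ψ‖ ^ 2 := by positivity
  have hs3 : s ≤ ‖ψ‖ ^ 2 * (1 + κ) := by
    have h3 : s ^ 2 ≤ ‖ψ‖ ^ 2 * (s * (1 + κ)) := by
      calc s ^ 2 ≤ (‖ψ‖ * ‖u + v‖) ^ 2 := pow_le_pow_left₀ hs0 hs1 2
        _ = ‖ψ‖ ^ 2 * ‖u + v‖ ^ 2 := by ring
        _ ≤ _ := mul_le_mul_of_nonneg_left hs2 hψn.le
    rcases hs0.eq_or_lt with h4 | h4
    · rw [← h4]; positivity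
    · have : s * s ≤ s * (‖ψ‖ ^ 2 * (1 + κ)) := by linarith
      exact le_of_mul_le_mul_left this h4
  have h3 : γt * (1 - κ) ≤ 2 * γ := by
    have h4 : γt * (2 * ‖ψ‖ ^ 2 - s) ≤ 2 * γ * ‖ψ‖ ^ 2 := by rw [hs]; linarith
    have h5 : γt * (‖ψ‖ ^ 2 * (1 - κ)) ≤ γt * (2 * ‖ψ‖ ^ 2 - s) :=
      mul_le_mul_of_nonneg_left (by linarith) hγt
    have h6 : ‖ψ‖ ^ 2 * (γt * (1 - κ)) ≤ ‖ψ‖ ^ 2 * (2 * γ) := by linarith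
    exact le_of_mul_le_mul_left h6 hψn
  set y := 2 * (m : ℝ) ^ 2 * ε with hy
  have hy0 : 0 < y := by positivity
  have h4 : 1 - κ = y / (1 + y) := by rw [hκ]; field_simp; ring
  rw [h4, ← mul_div_assoc, div_le_iff₀ (by positivity)] at h3
  have h5 : γt ≤ 2 * γ + 2 * γ / y := by
    rw [show 2 * γ + 2 * γ / y = 2 * γ * (1 + y) / y by field_simp; ring, le_div_iff₀ hy0]
    exact h3
  have h6 : 2 * γ / y = (g : ℝ) ^ 2 / (m : ℝ) ^ 2 := by
    rw [hy, hε]; field_simp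
  rw [← h6]; exact h5

end Abstract
/-! ### Combinatorics of the segments -/

section Combi

theorem bondIn_of {n : ℕ} [NeZero n] (t a x e : ℕ) (i : Fin n) (h : (i : ℕ) + e * n = a + x)
    (hx : x + 1 < t) : bondIn i (seg (a : Fin n) t) := by
  have hi : i = (a : Fin n) + (x : Fin n) := by
    ext
    rw [Fin.val_add, Fin.val_natCast, Fin.val_natCast, ← Nat.add_mod, ← h,
      Nat.add_mul_mod_self_right, Nat.mod_eq_of_lt i.2]
  constructor
  · rw [seg, Finset.mem_image]
    exact ⟨x, Finset.mem_range.2 (by omega), hi.symm⟩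
  · rw [seg, Finset.mem_image]
    refine ⟨x + 1, Finset.mem_range.2 hx, ?_⟩
    rw [hi]
    ext
    simp only [Fin.val_add, Fin.val_natCast, Fin.val_one', Nat.add_mod_mod, Nat.mod_add_mod]
    congr 1

theorem seg_disj {n : ℕ} [NeZero n] (t a b : ℕ) (h1 : a + t ≤ b) (h2 : b + t ≤ a + n) :
    Disjoint (seg (a : Fin n) t) (seg (b : Fin n) t) := by
  rw [Finset.disjoint_left]
  intro z hz hz'
  rw [seg, Finset.mem_image] at hz hz'
  obtain ⟨x, hx, hxz⟩ := hz
  obtain ⟨y, hy, hyz⟩ := hz'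
  rw [Finset.mem_range] at hx hy
  have h3 := congrArg Fin.val (hxz.trans hyz.symm)
  simp only [Fin.val_add, Fin.val_natCast, ← Nat.add_mod] at h3
  have h4 : (b + y - (a + x)) % n = 0 := Nat.sub_mod_eq_zero_of_mod_eq h3.symm
  rw [Nat.mod_eq_of_lt (by omega)] at h4
  omega

theorem spacing (t D : ℕ) (ht : 0 < t) (hD : 4 * t ≤ D) :
    ∃ (M : ℕ) (s : ℕ → ℕ), 4 ≤ M ∧ s 0 = 0 ∧ s M = D ∧
      (∀ k, s k + t ≤ s (k + 1)) ∧ ∀ k, s (k + 1) ≤ s k + t + (t + 2) / 4 := by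
  have hM : 4 ≤ D / t := by rw [Nat.le_div_iff_mul_le ht]; omega
  refine ⟨D / t, fun k => k * D / (D / t), hM, by simp, ?_, ?_, ?_⟩
  · exact Nat.mul_div_cancel_left _ (by omega)
  · intro k
    dsimp only
    have h1 : t * (D / t) ≤ D := Nat.mul_div_le D t
    rw [← Nat.add_mul_div_right _ _ (show 0 < D / t by omega)]
    apply Nat.div_le_div_right
    rw [Nat.succ_mul]; omega
  · intro k
    dsimp only
    have h1 : t * (D / t) + D % t = D := Nat.div_add_mod D t
    have h2 : D % t < t := Nat.mod_lt _ ht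
    set M := D / t
    set r := (t + 2) / 4
    have h3 : 4 * r ≤ M * r := Nat.mul_le_mul_right _ hM
    rw [add_assoc, ← Nat.add_mul_div_right _ _ (show 0 < M by omega)]
    apply Nat.div_le_div_right
    have h4 : (t + r) * M = t * M + M * r := by ring
    rw [Nat.succ_mul, h4]
    omega

theorem index_exists (s : ℕ → ℕ) (t : ℕ) (ht : 0 < t) (h0 : s 0 = 0)
    (h1 : ∀ k, s k + t ≤ s (k + 1)) (i : ℕ) : ∃ k, s k ≤ i ∧ i < s (k + 1) := by
  induction i with
  | zero => exact ⟨0, by omega, by have := h1 0; omega⟩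
  | succ i ih =>
    obtain ⟨k, hk1, hk2⟩ := ih
    by_cases h : i + 1 < s (k + 1)
    · exact ⟨k, by omega, h⟩
    · exact ⟨k + 1, by omega, by have := h1 (k + 1); omega⟩

theorem s_mono (s : ℕ → ℕ) (t : ℕ) (h1 : ∀ k, s k + t ≤ s (k + 1)) {k l : ℕ} (h : k ≤ l) :
    s k ≤ s l :=
  monotone_nat_of_le_succ (fun k => by have := h1 k; omega) h

theorem s_gap (s : ℕ → ℕ) (t : ℕ) (h1 : ∀ k, s k + t ≤ s (k + 1)) {k l : ℕ} (h : k < l) :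
    s k + t ≤ s l :=
  (h1 k).trans (s_mono s t h1 h)

theorem index_unique (s : ℕ → ℕ) (t : ℕ) 
    (h1 : ∀ k, s k + t ≤ s (k + 1)) {i k l : ℕ} (hk : s k ≤ i) (hk' : i < s (k + 1))
    (hl : s l ≤ i) (hl' : i < s (l + 1)) : k = l := by
  rcases lt_trichotomy k l with h | h | h
  · have := s_mono s t h1 (show k + 1 ≤ l from h); omega
  · exact h
  · have := s_mono s t h1 (show l + 1 ≤ k from h); omega

/-- the geometric data needed: the two families of segments and the depth function -/
theorem geometry {n : ℕ} [NeZero n] (t : ℕ) (ht : 9 ≤ t) (hn : 5 * t < n) (op : Bool) :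
    ∃ (MX MY : ℕ) (aX aY : ℕ → Fin n) (f : Fin n → ℕ),
      (∀ k < MX, op = true → (aX k : ℕ) + t ≤ n) ∧
      (∀ k < MY, op = true → (aY k : ℕ) + t ≤ n) ∧
      (∀ k l, k < l → l < MX → Disjoint (seg (aX k) t) (seg (aX l) t)) ∧
      (∀ k l, k < l → l < MY → Disjoint (seg (aY k) t) (seg (aY l) t)) ∧
      (∀ i, 0 < f i → (∃ k < MX, bondIn i (seg (aX k) t)) ∨ (op = true ∧ (i : ℕ) + 1 = n)) ∧
      (∀ i, f i < t / 4 → (∃ k < MY, bondIn i (seg (aY k) t)) ∨ (op = true ∧ (i : ℕ) + 1 = n)) ∧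
      (∀ i : Fin n, (op = true → (i : ℕ) + 1 ≠ n ∧ ((i + 1 : Fin n) : ℕ) + 1 ≠ n) →
        f i ≤ f (i + 1) + 1 ∧ f (i + 1) ≤ f i + 1) := by
  have hsucc : ∀ i : Fin n, (((i + 1 : Fin n) : ℕ) = i + 1 ∧ (i : ℕ) + 1 < n) ∨
      (((i + 1 : Fin n) : ℕ) = 0 ∧ (i : ℕ) + 1 = n) := by
    intro i
    have h1 : ((i + 1 : Fin n) : ℕ) = ((i : ℕ) + 1) % n := by
      rw [Fin.val_add, Fin.val_one', Nat.add_mod_mod]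
    have := i.2
    rcases Nat.lt_or_ge ((i : ℕ) + 1) n with h | h
    · left; rw [h1, Nat.mod_eq_of_lt h]; exact ⟨rfl, h⟩
    · right
      have h2 : (i : ℕ) + 1 = n := by omega
      rw [h1, h2, Nat.mod_self]; exact ⟨rfl, rfl⟩
  cases op with
  | false =>
    obtain ⟨M, s, hM, hs0, hsM, h1, h2⟩ := spacing t n (by omega) (by omega)
    choose kk hk1 hk2 using index_exists s t (by omega) hs0 h1
    set c := t / 2 with hc
    refine ⟨M, M, fun k => ((s k : ℕ) : Fin n), fun k => ((s k + c : ℕ) : Fin n),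
      fun i => min ((i : ℕ) - s (kk i) + 1) (t - 1 - ((i : ℕ) - s (kk i))), by simp, by simp,
      ?_, ?_, ?_, ?_, ?_⟩
    · intro k l hkl hl
      have := s_gap s t h1 hkl
      have := s_gap s t h1 hl
      exact seg_disj t _ _ (by omega) (by omega)
    · intro k l hkl hl
      have := s_gap s t h1 hkl
      have := s_gap s t h1 hl
      exact seg_disj t _ _ (by omega) (by omega)
    · intro i hi
      dsimp only at hi
      have a1 := hk1 i
      have a2 := hk2 i
      left
      refine ⟨kk i, ?_, bondIn_of t _ ((i : ℕ) - s (kk i)) 0 i (by omega) (by omega)⟩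
      by_contra hcon
      have := s_mono s t h1 (show M ≤ kk i by omega)
      omega
    · intro i hi
      dsimp only at hi
      have a1 := hk1 i
      have a2 := hk2 i
      have b1 := h1 (kk i)
      have b2 := h2 (kk i)
      have hkM : kk i < M := by
        by_contra hcon
        have := s_mono s t h1 (show M ≤ kk i by omega)
        omega
      left
      by_cases ho : c ≤ (i : ℕ) - s (kk i)
      · exact ⟨kk i, hkM, bondIn_of t _ ((i : ℕ) - s (kk i) - c) 0 i (by omega) (by omega)⟩
      · rcases Nat.eq_zero_or_pos (kk i) with h0 | h0
        · have b3 := h1 (M - 1)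
          have b4 := h2 (M - 1)
          rw [show M - 1 + 1 = M by omega] at b3 b4
          rw [h0, hs0] at hi ho
          exact ⟨M - 1, by omega, bondIn_of t _ ((i : ℕ) + n - s (M - 1) - c) 1 i
            (by omega) (by omega)⟩
        · have b3 := h1 (kk i - 1)
          have b4 := h2 (kk i - 1)
          rw [show kk i - 1 + 1 = kk i by omega] at b3 b4
          exact ⟨kk i - 1, by omega, bondIn_of t _ ((i : ℕ) - s (kk i - 1) - c) 0 i
            (by omega) (by omega)⟩
    · intro i _
      dsimp only
      have a1 := hk1 i
      have a2 := hk2 i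
      have b1 := h1 (kk i)
      rcases hsucc i with ⟨e1, e2⟩ | ⟨e1, e2⟩
      · rw [e1]
        have a3 := hk1 (i + 1)
        have a4 := hk2 (i + 1)
        by_cases h : (i : ℕ) + 1 < s (kk i + 1)
        · have : kk (i + 1) = kk i := index_unique s t h1 a3 a4 (by omega) h
          rw [this]; omega
        · have : kk (i + 1) = kk i + 1 :=
            index_unique s t h1 a3 a4 (by omega) (by have := h1 (kk i + 1); omega)
          rw [this]; omega
      · rw [e1]
        have a3 := hk1 0
        have a4 := hk2 0
        have b3 := h1 (M - 1)
        rw [show M - 1 + 1 = M by omega] at b3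
        have : kk i = M - 1 := index_unique s t h1 a1 a2 (by omega)
          (by rw [show M - 1 + 1 = M by omega]; omega)
        rw [this]
        omega
  | true =>
    obtain ⟨M, s, hM, hs0, hsM, h1, h2⟩ := spacing t (n - t) (by omega) (by omega)
    choose kk hk1 hk2 using index_exists s t (by omega) hs0 h1
    set c := t / 2 with hc
    have hval : ∀ a : ℕ, a < n → ((a : Fin n) : ℕ) = a := fun a ha => by
      rw [Fin.val_natCast, Nat.mod_eq_of_lt ha]
    have hkM : ∀ i : ℕ, i + 1 < n → kk i ≤ M := by
      intro i hi
      by_contra hcon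
      have h3 := s_mono s t h1 (show M + 1 ≤ kk i by omega)
      have h4 := h1 M
      have := hk1 i
      omega
    refine ⟨M + 1, M, fun k => ((s k : ℕ) : Fin n), fun k => ((s k + c : ℕ) : Fin n),
      fun i => min (if kk i = 0 then t else (i : ℕ) - s (kk i) + 1)
        (if kk i = M then t else t - 1 - ((i : ℕ) - s (kk i))), ?_, ?_,
      ?_, ?_, ?_, ?_, ?_⟩
    · intro k hk _
      have := s_mono s t h1 (show k ≤ M by omega)
      dsimp only
      rw [hval _ (by omega)]; omega
    · intro k hk _
      have := s_gap s t h1 hk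
      dsimp only
      rw [hval _ (by omega)]; omega
    · intro k l hkl hl
      have := s_gap s t h1 hkl
      have := s_mono s t h1 (show l ≤ M by omega)
      exact seg_disj t _ _ (by omega) (by omega)
    · intro k l hkl hl
      have := s_gap s t h1 hkl
      have := s_gap s t h1 hl
      exact seg_disj t _ _ (by omega) (by omega)
    · intro i hi
      dsimp only at hi
      have a1 := hk1 i
      have a2 := hk2 i
      by_cases hin : (i : ℕ) + 1 = n
      · exact Or.inr ⟨rfl, hin⟩
      left
      have := hkM i (by omega)
      refine ⟨kk i, by omega, bondIn_of t _ ((i : ℕ) - s (kk i)) 0 i (by omega) ?_⟩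
      by_cases hkk : kk i = M
      · rw [hkk]; omega
      · rw [if_neg hkk] at hi; omega
    · intro i hi
      dsimp only at hi
      have a1 := hk1 i
      have a2 := hk2 i
      have b1 := h1 (kk i)
      have b2 := h2 (kk i)
      by_cases hin : (i : ℕ) + 1 = n
      · exact Or.inr ⟨rfl, hin⟩
      left
      have hkM' := hkM i (by omega)
      by_cases ho : c ≤ (i : ℕ) - s (kk i)
      · by_cases hkk : kk i = M
        · rw [if_pos hkk, if_neg (by omega)] at hi
          omega
        · exact ⟨kk i, by omega, bondIn_of t _ ((i : ℕ) - s (kk i) - c) 0 i (by omega) (by omega)⟩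
      · by_cases h0 : kk i = 0
        · rw [if_pos h0, if_neg (by omega)] at hi
          omega
        · rw [if_neg h0] at hi
          have b3 := h1 (kk i - 1)
          have b4 := h2 (kk i - 1)
          rw [show kk i - 1 + 1 = kk i by omega] at b3 b4
          refine ⟨kk i - 1, by omega, bondIn_of t _ ((i : ℕ) - s (kk i - 1) - c) 0 i
            (by omega) ?_⟩
          split_ifs at hi <;> omega
    · intro i hop
      obtain ⟨o1, o2⟩ := hop rfl
      dsimp only
      have a1 := hk1 i
      have a2 := hk2 i
      have b1 := h1 (kk i)
      rcases hsucc i with ⟨e1, e2⟩ | ⟨e1, e2⟩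
      · rw [e1] at o2 ⊢
        have a3 := hk1 (i + 1)
        have a4 := hk2 (i + 1)
        have hkM' := hkM (i + 1) (by omega)
        by_cases h : (i : ℕ) + 1 < s (kk i + 1)
        · have : kk (i + 1) = kk i := index_unique s t h1 a3 a4 (by omega) h
          rw [this]
          split_ifs <;> omega
        · have : kk (i + 1) = kk i + 1 :=
            index_unique s t h1 a3 a4 (by omega) (by have := h1 (kk i + 1); omega)
          rw [this] at hkM' ⊢
          rw [if_neg (show ¬ kk i = M by omega), if_neg (show ¬ kk i + 1 = 0 by omega)]
          split_ifs <;> omega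
      · omega

end Combi
/-! ### Assembling -/

section Assemble

variable {n : ℕ} [NeZero n]

/-- the flattened family of projectors -/
def flatP (C : ChainSetup n E) (p : (i : Fin n) × Fin (C.m i)) : E →L[ℂ] E := C.P p.1 p.2

theorem hamOn_eq (C : ChainSetup n E) (F : Finset (Fin n)) :
    C.hamOn F = ∑ p ∈ Finset.univ.filter
      (fun p : (i : Fin n) × Fin (C.m i) => bondIn p.1 F), flatP C p := by
  unfold ChainSetup.hamOn ChainSetup.Hbond
  rw [Finset.sum_sigma']
  refine Finset.sum_congr ?_ fun _ _ => rfl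
  ext p
  simp

theorem Hfull_eq (C : ChainSetup n E) : C.Hfull = ∑ p, flatP C p := by
  unfold ChainSetup.Hfull ChainSetup.Hbond
  rw [Finset.sum_sigma']
  exact Finset.sum_congr rfl fun _ _ => rfl

theorem flat_commute (C : ChainSetup n E) {F F' : Finset (Fin n)} (h : Disjoint F F')
    (p q : (i : Fin n) × Fin (C.m i)) (hp : bondIn p.1 F) (hq : bondIn q.1 F') :
    Commute (flatP C p) (flatP C q) := by
  apply C.locality
  refine Finset.disjoint_of_subset_left ?_ (Finset.disjoint_of_subset_right ?_ h)
  · intro x hx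
    simp only [Finset.mem_insert, Finset.mem_singleton] at hx
    rcases hx with rfl | rfl
    · exact hp.1
    · exact hp.2
  · intro x hx
    simp only [Finset.mem_insert, Finset.mem_singleton] at hx
    rcases hx with rfl | rfl
    · exact hq.1
    · exact hq.2

theorem minEig_nonneg (T : E →L[ℂ] E) : 0 ≤ minNonzeroEig T :=
  Real.sInf_nonneg fun _ hc => hc.1.le

theorem gapped_minEig (T : E →L[ℂ] E) : Gapped T (minNonzeroEig T) := by
  intro c hc v hv hT
  exact csInf_le ⟨0, fun _ h => h.1.le⟩ ⟨hc, v, hv, hT⟩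

theorem localGap_le (C : ChainSetup n E) (op : Bool) (t : ℕ) (a : Fin n)
    (ha : op = true → (a : ℕ) + t ≤ n) :
    C.localGap op t ≤ minNonzeroEig (C.hamOn (seg a t)) := by
  refine csInf_le ⟨0, ?_⟩ ⟨a, ha, rfl⟩
  rintro x ⟨b, -, rfl⟩
  exact minEig_nonneg _

theorem localGap_nonneg (C : ChainSetup n E) (op : Bool) (t : ℕ) : 0 ≤ C.localGap op t := by
  apply Real.sInf_nonneg
  rintro x ⟨b, -, rfl⟩
  exact minEig_nonneg _

open Classical in
theorem union_gapped (C : ChainSetup n E) (op : Bool) (t M : ℕ) (a : ℕ → Fin n)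
    (ha : ∀ k < M, op = true → (a k : ℕ) + t ≤ n) (ht : 2 ≤ t)
    (hd : ∀ k l, k < l → l < M → Disjoint (seg (a k) t) (seg (a l) t)) :
    Gapped (∑ p ∈ Finset.univ.filter
      (fun p : (i : Fin n) × Fin (C.m i) => ∃ k < M, bondIn p.1 (seg (a k) t)), flatP C p)
      (C.localGap op t) := by
  have hP : ∀ p, IsProjector (flatP C p) := fun p => C.proj p.1 p.2
  have hd' : ∀ k < M, ∀ l < M, k ≠ l → Disjoint (seg (a k) t) (seg (a l) t) := by
    intro k hk l hl hkl
    rcases lt_or_gt_of_ne hkl with h | h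
    · exact hd k l h hl
    · exact (hd l k h hk).symm
  have h1 : Finset.univ.filter
      (fun p : (i : Fin n) × Fin (C.m i) => ∃ k < M, bondIn p.1 (seg (a k) t)) =
      (Finset.range M).biUnion (fun k => Finset.univ.filter
        (fun p : (i : Fin n) × Fin (C.m i) => bondIn p.1 (seg (a k) t))) := by
    ext p; simp
  rw [h1, Finset.sum_biUnion]
  · apply gapped_sum
    · intro k _
      exact sum_proj_symPos (flatP C) hP _
    · intro k hk c hc v hv hT
      refine (localGap_le C op t (a k) (ha k (Finset.mem_range.1 hk))).trans ?_
      rw [hamOn_eq]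
      refine gapped_minEig _ c hc v hv ?_
      convert hT
    · intro k hk l hl hkl x
      rw [sum_apply, sum_apply, sum_inner, Complex.re_sum]
      apply Finset.sum_nonneg
      intro p hp
      rw [inner_sum, Complex.re_sum]
      apply Finset.sum_nonneg
      intro q hq
      rw [Finset.mem_filter] at hp hq
      exact proj_commute_re (hP p) (hP q) (flat_commute C
        (hd' k (Finset.mem_range.1 hk) l (Finset.mem_range.1 hl) hkl) p q hp.2 hq.2) x
  · intro k hk l hl hkl
    rw [Function.onFun, Finset.disjoint_left]
    intro p hp hq
    rw [Finset.mem_filter] at hp hq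
    exact Finset.disjoint_left.1 (hd' k (by simpa using hk) l (by simpa using hl) hkl) hp.2.1 hq.2.1

end Assemble

/-- for a frustration-free Hamiltonian on a chain of `n` qudits as in the
setup (noncommutation degree `g`, `L` commuting layers, spectral gap `γ`, local gaps
`γ(t)`), if `γ ≤ g²/4` then for every `t` with `8L² < t < n/5` one has
`γ(t) ≤ 10³·L²·g²/t² + 6γ`.  The flag `openBC` selects the open chain (where the last bond
interaction vanishes) or the closed chain. -/
theorem stmt_0 {n : ℕ} [NeZero n] (C : ChainSetup n E)
    (t : ℕ) (ht1 : 8 * C.L ^ 2 < t) (ht2 : 5 * t < n)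
    (openBC : Bool)
    (hopen : openBC = true → C.Hbond ⟨n - 1, by omega⟩ = 0)
    (hγ : C.gap ≤ (C.g : ℝ) ^ 2 / 4) :
    C.localGap openBC t ≤
      10 ^ 3 * (C.L : ℝ) ^ 2 * (C.g : ℝ) ^ 2 / (t : ℝ) ^ 2 + 6 * C.gap := by
  classical
  have hP : ∀ p, IsProjector (flatP C p) := fun p => C.proj p.1 p.2
  have hγ0 : 0 ≤ C.gap := minEig_nonneg _
  have hsp := sum_proj_symPos (flatP C) hP Finset.univ
  by_cases hne : {c : ℝ | 0 < c ∧ ∃ v : E, v ≠ 0 ∧ C.Hfull v = (c : ℂ) • v}.Nonempty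
  swap
  · -- no excitations at all
    have hv : ∀ γ', Gapped (∑ p, flatP C p) γ' := by
      intro γ' c hc v hv hT
      exact absurd ⟨c, hc, v, hv, by rw [Hfull_eq]; exact hT⟩ hne
    have hz : minNonzeroEig (C.hamOn (seg 0 t)) ≤ 0 := by
      have : {c : ℝ | 0 < c ∧ ∃ v : E, v ≠ 0 ∧ C.hamOn (seg 0 t) v = (c : ℂ) • v} = ∅ := by
        rw [Set.eq_empty_iff_forall_notMem]
        rintro c ⟨hc, v, hv0, hT⟩
        have h1 : (inner ℂ v (C.hamOn (seg 0 t) v)).re = c * ‖v‖ ^ 2 := by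
          rw [hT, inner_smul_right, Complex.re_ofReal_mul]
          congr 1
          exact inner_self_eq_norm_sq (𝕜 := ℂ) _
        have h2 : (inner ℂ v (C.hamOn (seg 0 t) v)).re ≤
            (inner ℂ v ((∑ p, flatP C p) v)).re := by
          rw [hamOn_eq, sum_proj_re _ hP, sum_proj_re _ hP]
          exact Finset.sum_le_sum_of_subset_of_nonneg (Finset.subset_univ _)
            fun _ _ _ => sq_nonneg _
        have h3 : 0 < c * ‖v‖ ^ 2 := by positivity
        set E0 := (inner ℂ v ((∑ p, flatP C p) v)).re with hE0
        have hE : 0 < E0 := by linarith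
        have h4 := gapped_sq hsp (hv ((‖(∑ p, flatP C p) v‖ ^ 2 + 1) / E0)) v
        rw [← hE0, div_mul_cancel₀ _ hE.ne'] at h4
        linarith
      unfold minNonzeroEig
      rw [this, Real.sInf_empty]
    have h1 := localGap_le C openBC t 0 (fun _ => by simp; omega)
    have h2 : 0 ≤ 10 ^ 3 * (C.L : ℝ) ^ 2 * (C.g : ℝ) ^ 2 / (t : ℝ) ^ 2 := by positivity
    linarith
  -- the gap is attained
  have hfin : {c : ℝ | 0 < c ∧ ∃ v : E, v ≠ 0 ∧ C.Hfull v = (c : ℂ) • v}.Finite := by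
    have h1 := Module.End.finite_hasEigenvalue (C.Hfull : E →ₗ[ℂ] E)
    have h2 := h1.preimage (f := fun c : ℝ => (c : ℂ)) Complex.ofReal_injective.injOn
    refine h2.subset ?_
    rintro c ⟨-, v, hv, hT⟩
    exact Module.End.hasEigenvalue_of_hasEigenvector
      (x := v) ⟨Module.End.mem_eigenspace_iff.2 hT, hv⟩
  obtain ⟨hγpos, ψ, hψ0, hψ⟩ := hne.csInf_mem hfin
  change 0 < C.gap at hγpos
  change C.Hfull ψ = ((C.gap : ℝ) : ℂ) • ψ at hψ
  have hg0 : 0 < C.g := by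
    rcases Nat.eq_zero_or_pos C.g with h | h
    · rw [h] at hγ
      norm_num at hγ
      linarith
    · exact h
  have hL0 : 0 < C.L := by
    by_contra hL
    have hL' : C.L = 0 := by omega
    have : IsEmpty ((i : Fin n) × Fin (C.m i)) :=
      ⟨fun p => by have := (C.layer p).2; omega⟩
    rw [Hfull_eq, Finset.univ_eq_empty, Finset.sum_empty] at hψ
    have h1 : ((C.gap : ℝ) : ℂ) • ψ = 0 := hψ.symm
    rcases smul_eq_zero.1 h1 with h | h
    · have : C.gap = 0 := by exact_mod_cast h
      linarith
    · exact hψ0 h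
  have hLsq : C.L ≤ C.L ^ 2 := by nlinarith
  have ht9 : 9 ≤ t := by omega
  obtain ⟨MX, MY, aX, aY, f, hX1, hY1, hX2, hY2, hX3, hY3, hf⟩ :=
    geometry (n := n) t ht9 ht2 openBC
  set m := t / (8 * C.L) with hm
  have hm1 : 1 ≤ m := by
    rw [hm, Nat.le_div_iff_mul_le (by omega)]; omega
  have hN : m * (C.L + C.L) ≤ t / 4 := by
    rw [Nat.le_div_iff_mul_le (by norm_num)]
    have := Nat.div_mul_le_self t (8 * C.L)
    rw [← hm] at this
    nlinarith
  have hlast : ∀ p : (i : Fin n) × Fin (C.m i), openBC = true ∧ (p.1 : ℕ) + 1 = n →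
      flatP C p = 0 := by
    rintro ⟨i, j⟩ ⟨ho, hi⟩
    have hi' : i = ⟨n - 1, by omega⟩ := by ext; simp at hi ⊢; omega
    have h1 := hopen ho
    rw [← hi'] at h1
    ext x
    exact (sum_proj_ker (C.P i) (C.proj i) Finset.univ x).1
      (by have := congrArg (fun T : E →L[ℂ] E => T x) h1; exact this) j (Finset.mem_univ j)
  have hnz : ∀ p q, ¬ Commute (flatP C p) (flatP C q) →
      (openBC = true → (p.1 : ℕ) + 1 ≠ n) ∧ (openBC = true → (q.1 : ℕ) + 1 ≠ n) := by
    intro p q hpq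
    refine ⟨fun ho h => hpq ?_, fun ho h => hpq ?_⟩
    · rw [hlast p ⟨ho, h⟩]; exact Commute.zero_left _
    · rw [hlast q ⟨ho, h⟩]; exact Commute.zero_right _
  have key := main_abs (flatP C) hP C.g C.L m (t / 4) hg0 hm1 hN
    (by
      intro p
      have := C.gbound p
      rw [Nat.card_eq_fintype_card, Fintype.card_subtype] at this
      refine (Finset.card_le_card ?_).trans this
      intro q hq
      simp only [Finset.mem_filter, Finset.mem_univ, true_and] at hq ⊢
      exact hq)
    C.layer C.layers
    (Finset.univ.filter (fun p => ∃ k < MX, bondIn p.1 (seg (aX k) t)))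
    (Finset.univ.filter (fun p => ∃ k < MY, bondIn p.1 (seg (aY k) t)))
    (fun p => f p.1)
    (by
      intro p hp
      rcases hX3 p.1 hp with h | h
      · left; rw [Finset.mem_filter]; exact ⟨Finset.mem_univ _, h⟩
      · right; exact hlast p h)
    (by
      intro p hp
      rcases hY3 p.1 hp with h | h
      · left; rw [Finset.mem_filter]; exact ⟨Finset.mem_univ _, h⟩
      · right; exact hlast p h)
    (by
      intro p q hpq
      obtain ⟨hp, hq⟩ := hnz p q hpq
      by_cases hd : Disjoint ({p.1, p.1 + 1} : Finset (Fin n)) ({q.1, q.1 + 1} : Finset (Fin n))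
      · exact absurd (C.locality p.1 q.1 p.2 q.2 hd) hpq
      · rw [Finset.not_disjoint_iff] at hd
        obtain ⟨x, hx, hx'⟩ := hd
        simp only [Finset.mem_insert, Finset.mem_singleton] at hx hx'
        have hcases : p.1 = q.1 ∨ p.1 = q.1 + 1 ∨ q.1 = p.1 + 1 := by
          rcases hx with h | h <;> rcases hx' with h' | h'
          · exact Or.inl (h.symm.trans h')
          · exact Or.inr (Or.inl (h.symm.trans h'))
          · exact Or.inr (Or.inr (h'.symm.trans h))
          · exact Or.inl (add_right_cancel (h.symm.trans h'))
        rcases hcases with h | h | h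
        · rw [h]; omega
        · have := (hf q.1 (fun ho => ⟨hq ho, by rw [← h]; exact hp ho⟩)).2
          rw [← h] at this; exact this
        · have := (hf p.1 (fun ho => ⟨hp ho, by rw [← h]; exact hq ho⟩)).1
          rw [← h] at this; exact this)
    C.gap (C.localGap openBC t) hγpos (localGap_nonneg C openBC t)
    (by rw [← Hfull_eq]; exact gapped_minEig _)
    (union_gapped C openBC t MX aX hX1 (by omega) hX2)
    (union_gapped C openBC t MY aY hY1 (by omega) hY2)
    ψ hψ0 (by rw [← Hfull_eq]; exact hψ)
  refine key.trans ?_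
  have hmt : (t : ℝ) ≤ 16 * C.L * m := by
    have h1 : t < (m + 1) * (8 * C.L) := by
      have := Nat.lt_div_mul_add (a := t) (show 0 < 8 * C.L by omega)
      rw [← hm] at this; linarith
    have h2 : t ≤ 16 * C.L * m := by nlinarith
    exact_mod_cast h2
  have htR : (0 : ℝ) < t := by exact_mod_cast (show 0 < t by omega)
  have hmR : (0 : ℝ) < m := by exact_mod_cast (show 0 < m by omega)
  have hfinal : (C.g : ℝ) ^ 2 / (m : ℝ) ^ 2 ≤
      10 ^ 3 * (C.L : ℝ) ^ 2 * (C.g : ℝ) ^ 2 / (t : ℝ) ^ 2 := by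
    rw [div_le_div_iff₀ (by positivity) (by positivity)]
    have h1 : (t : ℝ) ^ 2 ≤ (16 * C.L * m) ^ 2 := pow_le_pow_left₀ htR.le hmt 2
    have h2 : (C.g : ℝ) ^ 2 * (t : ℝ) ^ 2 ≤ (C.g : ℝ) ^ 2 * (16 * C.L * m) ^ 2 :=
      mul_le_mul_of_nonneg_left h1 (sq_nonneg _)
    have h3 : 0 ≤ (C.g : ℝ) ^ 2 * ((C.L : ℝ) ^ 2 * (m : ℝ) ^ 2) := by positivity
    nlinarith
  linarith
end

section
/- (Converse to the detectability lemma.) Let H = Σ_{i,j} P_{ij} be a frustration-free Hamiltonian as in the setup, with detectability-lemma operator DL(H). Then for any unit vector ψ, ‖DL(H)ψ‖² ≥ 1 − 4·⟨ψ, Hψ⟩. -/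
variable {E : Type*} [NormedAddCommGroup E] [InnerProductSpace ℂ E] [FiniteDimensional ℂ E]

/-- The detectability-lemma operator `DL(H) = ∏_{α=1}^{L} ∏_{i ∈ T_α} (1 − P_i)`:
the product of the complementary projectors, taken layer by layer. -/
noncomputable def DLop {ι : Type*} [Fintype ι] [DecidableEq ι] {L : ℕ}
    (P : ι → (E →L[ℂ] E)) (layer : ι → Fin L)
    (hcomm : ∀ i j, layer i = layer j → Commute (P i) (P j)) : E →L[ℂ] E :=
  ((List.finRange L).map (fun α =>
    (Finset.univ.filter (fun i => layer i = α)).noncommProd (fun i => 1 - P i)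
      (fun i hi j hj _ =>
        Commute.sub_left (Commute.one_left _)
          (Commute.sub_right (Commute.one_right _)
            (hcomm i j (by
              simp only [Finset.coe_filter, Set.mem_setOf_eq] at hi hj
              rw [hi.2, hj.2]))))) ).prod


theorem aux_list {ι : Type*} (P : ι → (E →L[ℂ] E)) (hproj : ∀ i, IsProjector (P i)) (ψ : E)
    (l : List ι) :
    0 ≤ (l.map (fun i => ‖P i ψ‖ ^ 2)).sum ∧
    ‖(l.map (fun i => 1 - P i)).prod ψ‖ ^ 2 ≤ ‖ψ‖ ^ 2 ∧
    (inner ℂ ψ (ψ - (l.map (fun i => 1 - P i)).prod ψ) : ℂ).re ^ 2 ≤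
      (l.map (fun i => ‖P i ψ‖ ^ 2)).sum *
        (‖ψ‖ ^ 2 - ‖(l.map (fun i => 1 - P i)).prod ψ‖ ^ 2) := by
  induction l with
  | nil => simp
  | cons i l ih =>
    obtain ⟨h1, h2, h3⟩ := ih
    simp only [List.map_cons, List.sum_cons, List.prod_cons]
    set D := (l.map (fun i => 1 - P i)).prod
    set S := (l.map (fun i => ‖P i ψ‖ ^ 2)).sum
    have hDe : ((1 - P i) * D) ψ = D ψ - P i (D ψ) := by simp
    rw [hDe]
    have hsym : ∀ x y : E, (inner ℂ (P i x) y : ℂ) = inner ℂ x (P i y) := by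
      intro x y
      exact (hproj i).1.isSymmetric x y
    have hid : ∀ x : E, P i (P i x) = P i x := by
      intro x
      have := congrArg (fun T : E →L[ℂ] E => T x) (hproj i).2
      simpa using this
    have hin : ∀ x y : E, (inner ℂ x (P i y) : ℂ) = inner ℂ (P i x) (P i y) := by
      intro x y
      rw [hsym, hid]
    have hn : ‖D ψ - P i (D ψ)‖ ^ 2 = ‖D ψ‖ ^ 2 - ‖P i (D ψ)‖ ^ 2 := by
      rw [@norm_sub_sq ℂ, hin, inner_self_eq_norm_sq]
      ring
    have hsplit : (inner ℂ ψ (ψ - (D ψ - P i (D ψ))) : ℂ).re =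
        (inner ℂ ψ (ψ - D ψ) : ℂ).re + (inner ℂ (P i ψ) (P i (D ψ)) : ℂ).re := by
      rw [← hin, ← Complex.add_re, ← inner_add_right]
      congr 2
      abel
    have hcs : (inner ℂ (P i ψ) (P i (D ψ)) : ℂ).re ^ 2 ≤ (‖P i ψ‖ * ‖P i (D ψ)‖) ^ 2 := by
      apply sq_le_sq'
      · have := (Complex.abs_re_le_norm _).trans (norm_inner_le_norm (𝕜 := ℂ) (P i ψ) (P i (D ψ)))
        exact (abs_le.1 this).1
      · have := (Complex.abs_re_le_norm _).trans (norm_inner_le_norm (𝕜 := ℂ) (P i ψ) (P i (D ψ)))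
        exact (abs_le.1 this).2
    rw [hsplit, hn]
    refine ⟨by positivity, by nlinarith [sq_nonneg ‖P i (D ψ)‖], ?_⟩
    generalize (inner ℂ ψ (ψ - D ψ) : ℂ).re = a at *
    generalize (inner ℂ (P i ψ) (P i (D ψ)) : ℂ).re = b at *
    generalize ‖P i ψ‖ = p at *
    generalize ‖P i (D ψ)‖ = q at *
    have hT : 0 ≤ ‖ψ‖ ^ 2 - ‖D ψ‖ ^ 2 := by linarith
    have key : ‖ψ‖ ^ 2 - (‖D ψ‖ ^ 2 - q ^ 2) = (‖ψ‖ ^ 2 - ‖D ψ‖ ^ 2) + q ^ 2 := by ring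
    rw [key]
    generalize ‖ψ‖ ^ 2 - ‖D ψ‖ ^ 2 = T at *
    have hab : (2 * (a * b)) ^ 2 ≤ (S * q ^ 2 + p ^ 2 * T) ^ 2 := by
      have e1 : a ^ 2 * b ^ 2 ≤ (S * T) * (p * q) ^ 2 :=
        mul_le_mul h3 hcs (sq_nonneg _) (mul_nonneg h1 hT)
      nlinarith [sq_nonneg (S * q ^ 2 - p ^ 2 * T)]
    have h4 := abs_le_of_sq_le_sq hab (by positivity)
    nlinarith [(abs_le.1 h4).2]

theorem aux_DL {ι : Type*} [Fintype ι] [DecidableEq ι] {L : ℕ}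
    (P : ι → (E →L[ℂ] E)) (layer : ι → Fin L)
    (hcomm : ∀ i j, layer i = layer j → Commute (P i) (P j)) :
    ∃ l : List ι, DLop P layer hcomm = (l.map (fun i => 1 - P i)).prod ∧
      ∀ f : ι → ℝ, (l.map f).sum = ∑ i, f i := by
  refine ⟨(List.finRange L).flatMap
    (fun α => (Finset.univ.filter (fun i => layer i = α)).toList), ?_, ?_⟩
  · unfold DLop
    rw [List.map_flatMap, List.flatMap, List.prod_flatten, List.map_map]
    congr 1
    apply List.map_congr_left
    intro α _
    simp only [Function.comp]
    rw [← Finset.noncommProd_toFinset _ _ _ (Finset.nodup_toList _)]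
    · congr 1
      simp
    · intro i hi j hj _
      have hi' : layer i = α := by simpa using hi
      have hj' : layer j = α := by simpa using hj
      exact Commute.sub_left (Commute.one_left _) (Commute.sub_right (Commute.one_right _)
        (hcomm i j (by rw [hi', hj'])))
  · intro f
    rw [List.map_flatMap, List.flatMap, List.sum_flatten, List.map_map]
    rw [← Finset.sum_fiberwise Finset.univ layer f, ← List.ofFn_eq_map, List.sum_ofFn]
    simp

/-- Converse to the detectability lemma: for a frustration-free Hamiltonian
`H = Σᵢ Pᵢ` as in the setup (orthogonal projectors partitioned into layers of pairwise
commuting terms, nonzero common ground space), and any unit vector `ψ`,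
`‖DL(H)ψ‖² ≥ 1 − 4·⟨ψ, Hψ⟩`. -/
theorem stmt_6 {ι : Type*} [Fintype ι] [DecidableEq ι] {L : ℕ}
    (P : ι → (E →L[ℂ] E)) (hproj : ∀ i, IsProjector (P i))
    (layer : ι → Fin L)
    (hcomm : ∀ i j, layer i = layer j → Commute (P i) (P j))
    (g : ℕ) (hgbound : ∀ i, Nat.card {j : ι // j ≠ i ∧ ¬ Commute (P i) (P j)} ≤ g)
    (hff : ∃ v : E, v ≠ 0 ∧ ∀ i, P i v = 0)
    (ψ : E) (hψ : ‖ψ‖ = 1) :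
    1 - 4 * (inner ℂ ψ ((∑ i, P i) ψ) : ℂ).re ≤ ‖DLop P layer hcomm ψ‖ ^ 2 := by
  obtain ⟨l, hl, hsum⟩ := aux_DL P layer hcomm
  obtain ⟨h1, h2, h3⟩ := aux_list P hproj ψ l
  rw [← hl, hsum] at h3
  rw [hsum] at h1
  rw [← hl] at h2
  have hE : (inner ℂ ψ ((∑ i, P i) ψ) : ℂ).re = ∑ i, ‖P i ψ‖ ^ 2 := by
    rw [ContinuousLinearMap.sum_apply, inner_sum, Complex.re_sum]
    refine Finset.sum_congr rfl fun i _ => ?_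
    have hid : P i (P i ψ) = P i ψ := by
      have := congrArg (fun T : E →L[ℂ] E => T ψ) (hproj i).2
      simpa using this
    have hs : (inner ℂ (P i ψ) (P i ψ) : ℂ) = inner ℂ ψ (P i (P i ψ)) :=
      (hproj i).1.isSymmetric ψ (P i ψ)
    rw [hid] at hs
    rw [← hs]
    exact inner_self_eq_norm_sq (𝕜 := ℂ) (P i ψ)
  rw [hE]
  generalize ∑ i, ‖P i ψ‖ ^ 2 = S at *
  have hr : 1 - ‖DLop P layer hcomm ψ‖ ≤
      (inner ℂ ψ (ψ - DLop P layer hcomm ψ) : ℂ).re := by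
    have e1 : (inner ℂ ψ ψ : ℂ).re = 1 := by
      have := inner_self_eq_norm_sq (𝕜 := ℂ) ψ
      rw [hψ] at this
      simpa using this
    have e2 := re_inner_le_norm (𝕜 := ℂ) ψ (DLop P layer hcomm ψ)
    rw [hψ, one_mul] at e2
    rw [inner_sub_right, Complex.sub_re, e1]
    have e3 : (inner ℂ ψ (DLop P layer hcomm ψ) : ℂ).re ≤ ‖DLop P layer hcomm ψ‖ := e2
    linarith
  rw [hψ] at h2 h3
  have hn := norm_nonneg (DLop P layer hcomm ψ)
  generalize ‖DLop P layer hcomm ψ‖ = n at *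
  generalize (inner ℂ ψ (ψ - DLop P layer hcomm ψ) : ℂ).re = a at *
  have hn1 : n ≤ 1 := by nlinarith
  rcases hn1.eq_or_lt with h | h
  · rw [h]; linarith
  · have e : (1 - n) ^ 2 ≤ S * (1 ^ 2 - n ^ 2) :=
      (pow_le_pow_left₀ (by linarith) hr 2).trans h3
    have e' : 1 - n ≤ S * (1 + n) := by
      refine le_of_mul_le_mul_left ?_ (sub_pos.2 h)
      nlinarith
    have e4 : (1 - n) * (1 + n) ≤ S * (1 + n) * (1 + n) :=
      mul_le_mul_of_nonneg_right e' (by linarith)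
    have e5 : S * ((1 + n) * (1 + n)) ≤ S * 4 :=
      mul_le_mul_of_nonneg_left (by nlinarith) h1
    nlinarith
end

section
/- Let H be a frustration-free Hamiltonian on a chain of n qudits as in the setup, with spectral gap γ, noncommutation degree g, L layers, coarse-grained Hamiltonian H̄(t) with gap γ(H̄(t)), coarse-grained detectability operator DL(t), and detectability-lemma operator DL(H), for a coarse-graining parameter t with 8L² < t < n/5. Then 1 − 3·γ(H̄(t)) ≤ max_{ψ ∈ G⊥, ‖ψ‖=1} ‖DL(t)ψ‖² ≤ max_{x ∈ (0, 1 − γ/(g²+γ))} step_{t/(8L), γ/(g²+γ)}(x), where step_{m,ν}(x) = T_⌈m⌉(−1 + 2x/(1−ν)) / T_⌈m⌉((1+ν)/(1−ν)) and T denotes Chebyshev polynomials of the first kind. -/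
open scoped ComplexOrder
open scoped Fin.NatCast

variable {E : Type*} [NormedAddCommGroup E] [InnerProductSpace ℂ E] [FiniteDimensional ℂ E]

/-- The polynomial `step_{m,ν}(x) = T_⌈m⌉(−1 + 2x/(1−ν)) / T_⌈m⌉((1+ν)/(1−ν))`,
where `T_k` is the Chebyshev polynomial of the first kind. -/
noncomputable def stepPoly (m ν : ℝ) (x : ℝ) : ℝ :=
  (Polynomial.Chebyshev.T ℝ ⌈m⌉).eval (-1 + 2 * x / (1 - ν)) /
    (Polynomial.Chebyshev.T ℝ ⌈m⌉).eval ((1 + ν) / (1 - ν))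


section Combi

open scoped Fin.CommRing

variable {n : ℕ} [NeZero n]

theorem mem_seg {a i : Fin n} {t : ℕ} : i ∈ seg a t ↔ ∃ k : ℕ, k < t ∧ a + (k : Fin n) = i := by
  simp [seg]

theorem natCast_fin_inj {x y : ℕ} (h : (x : Fin n) = (y : Fin n)) : x % n = y % n := by
  have := congrArg Fin.val h
  simpa [Fin.val_natCast] using this

theorem seg_cover {t : ℕ} (ht : 0 < t) (G : CoarseGraining n t) (j : Fin n) :
    ∃ (k : Fin G.M) (e : ℕ), e < t + G.r k ∧ j = G.s k + (e : Fin n) := by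
  obtain ⟨kk, hk0, hks⟩ : ∃ kk : ℕ → Fin G.M, kk 0 = ⟨0, G.hMpos⟩ ∧
      ∀ m, kk (m+1) = cyc (kk m) :=
    ⟨fun m => Nat.rec (⟨0, G.hMpos⟩ : Fin G.M) (fun _ k => cyc k) m, rfl, fun _ => rfl⟩
  obtain ⟨u, hu0, hus⟩ : ∃ u : ℕ → ℕ, u 0 = 0 ∧ ∀ m, u (m+1) = u m + (t + G.r (kk m)) :=
    ⟨fun m => Nat.rec 0 (fun m x => x + (t + G.r (kk m))) m, rfl, fun _ => rfl⟩
  have hsu : ∀ m, G.s (kk m) = G.s ⟨0, G.hMpos⟩ + ((u m : ℕ) : Fin n) := by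
    intro m
    induction m with
    | zero => simp [hk0, hu0]
    | succ m ih => rw [hks, G.hs, ih, hus]; push_cast; ring
  have hul : ∀ m, m ≤ u m := by
    intro m
    induction m with
    | zero => simp
    | succ m ih => rw [hus]; omega
  set x : ℕ := (j - G.s ⟨0, G.hMpos⟩ : Fin n).val with hx
  have hj : j = G.s ⟨0, G.hMpos⟩ + (x : Fin n) := by
    rw [hx, Fin.cast_val_eq_self]; ring
  have hex : ∃ m, x < u m := ⟨x+1, by have := hul (x+1); omega⟩
  classical
  have h1 := Nat.find_spec hex
  have h2 : Nat.find hex ≠ 0 := by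
    intro h0; rw [h0, hu0] at h1; omega
  obtain ⟨m, hm⟩ := Nat.exists_eq_succ_of_ne_zero h2
  have h3 : ¬ x < u m := Nat.find_min hex (by omega)
  rw [hm, Nat.succ_eq_add_one, hus] at h1
  refine ⟨kk m, x - u m, by omega, ?_⟩
  rw [hsu, hj, add_assoc, ← Nat.cast_add]
  congr 2
  omega

theorem overlap_pos {t : ℕ} (ht : 4 ≤ t) (ht2 : 5 * t < n) (s a : Fin n) (r : ℕ) (hr : 4 * r ≤ t)
    (h1 : t / 4 ≤ (seg s t ∩ seg a t).card)
    (h2 : t / 4 ≤ (seg (s + ((t + r : ℕ) : Fin n)) t ∩ seg a t).card) :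
    ∃ b : ℕ, a = s + (b : Fin n) ∧ b + t / 4 ≤ t ∧ r + t / 4 ≤ b := by
  set b : ℕ := (a - s : Fin n).val with hb
  have hbn : b < n := Fin.isLt _
  have ha : a = s + (b : Fin n) := by
    rw [hb, Fin.cast_val_eq_self]; ring
  have ht4 : 1 ≤ t / 4 := by omega
  have key : ∀ x y : ℕ, x < 3 * t → y < t → s + (x : Fin n) = a + (y : Fin n) →
      x = b + y ∨ x + n = b + y := by
    intro x y hx hy h
    rw [ha, add_assoc, ← Nat.cast_add] at h
    have := natCast_fin_inj (add_left_cancel h)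
    rw [Nat.mod_eq_of_lt (by omega : x < n)] at this
    rcases lt_or_ge (b + y) n with h' | h'
    · rw [Nat.mod_eq_of_lt h'] at this; exact Or.inl this
    · rw [Nat.mod_eq_sub_mod h', Nat.mod_eq_of_lt (by omega)] at this
      right; omega
  obtain ⟨z, hz⟩ := Finset.card_pos.1 (lt_of_lt_of_le ht4 h1)
  obtain ⟨z', hz'⟩ := Finset.card_pos.1 (lt_of_lt_of_le ht4 h2)
  rw [Finset.mem_inter, mem_seg, mem_seg] at hz hz'
  obtain ⟨⟨x, hx, rfl⟩, ⟨y, hy, hxy⟩⟩ := hz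
  obtain ⟨⟨x', hx', rfl⟩, ⟨y', hy', hxy'⟩⟩ := hz'
  have k1 := key x y (by omega) hy hxy.symm
  rw [add_assoc, ← Nat.cast_add] at hxy'
  have k2 := key _ y' (by omega) hy' hxy'.symm
  have hbt : b < t := by omega
  refine ⟨b, ha, ?_, ?_⟩
  · have : (seg s t ∩ seg a t) ⊆ (Finset.Ico b t).image (fun k : ℕ => s + (k : Fin n)) := by
      intro w hw
      rw [Finset.mem_inter, mem_seg, mem_seg] at hw
      obtain ⟨⟨x, hx, rfl⟩, ⟨y, hy, hxy⟩⟩ := hw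
      have k1 := key x y (by omega) hy hxy.symm
      exact Finset.mem_image.2 ⟨x, Finset.mem_Ico.2 ⟨by omega, hx⟩, rfl⟩
    have := (Finset.card_le_card this).trans Finset.card_image_le
    rw [Nat.card_Ico] at this
    omega
  · have : (seg (s + ((t + r : ℕ) : Fin n)) t ∩ seg a t) ⊆
        (Finset.Ico (t + r - b) t).image (fun k : ℕ => a + (k : Fin n)) := by
      intro w hw
      rw [Finset.mem_inter, mem_seg, mem_seg] at hw
      obtain ⟨⟨x, hx, hxe⟩, ⟨y, hy, rfl⟩⟩ := hw
      rw [add_assoc, ← Nat.cast_add] at hxe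
      have k1 := key _ y (by omega) hy hxe
      exact Finset.mem_image.2 ⟨y, Finset.mem_Ico.2 ⟨by omega, hy⟩, rfl⟩
    have := (Finset.card_le_card this).trans Finset.card_image_le
    rw [Nat.card_Ico] at this
    omega

variable {E : Type*} [NormedAddCommGroup E] [InnerProductSpace ℂ E] [FiniteDimensional ℂ E]

/-- bonds not inside any `S`-segment, with nonzero interaction -/
def badBond (C : ChainSetup n E) {t : ℕ} (G : CoarseGraining n t) (j : Fin n) : Prop :=
  (∀ k, ¬ bondIn j (seg (G.s k) t)) ∧ C.Hbond j ≠ 0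

/-- bonds within distance `d` of a bad bond -/
def nearBad (C : ChainSetup n E) {t : ℕ} (G : CoarseGraining n t) (d : ℕ) (i : Fin n) : Prop :=
  ∃ j, badBond C G j ∧ ∃ c : ℕ, c ≤ 2 * d ∧ i + (d : Fin n) = j + (c : Fin n)

theorem badBond.near {C : ChainSetup n E} {t : ℕ} {G : CoarseGraining n t} {j : Fin n}
    (h : badBond C G j) (d : ℕ) : nearBad C G d j := ⟨j, h, d, by omega, rfl⟩

theorem near_disjoint {C : ChainSetup n E} {t : ℕ} {G : CoarseGraining n t} {i i' : Fin n}
    {d d' : ℕ} (hd : d' < d) (h' : nearBad C G d' i') (h : ¬ nearBad C G d i) :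
    Disjoint ({i', i' + 1} : Finset (Fin n)) ({i, i + 1} : Finset (Fin n)) := by
  obtain ⟨j, hj, c, hc, he⟩ := h'
  obtain ⟨m, rfl⟩ := Nat.exists_eq_add_of_lt hd
  have n0 : i ≠ i' := by
    rintro rfl
    refine h ⟨j, hj, c + (m + 1), by omega, ?_⟩
    push_cast
    linear_combination he
  have n1 : i ≠ i' + 1 := by
    rintro rfl
    refine h ⟨j, hj, c + (m + 2), by omega, ?_⟩
    push_cast
    linear_combination he
  have n2 : i + 1 ≠ i' := by
    rintro rfl
    refine h ⟨j, hj, c + m, by omega, ?_⟩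
    push_cast
    linear_combination he
  rw [Finset.disjoint_left]
  intro x hx hx'
  simp only [Finset.mem_insert, Finset.mem_singleton] at hx hx'
  rcases hx with rfl | rfl <;> rcases hx' with h | h
  · exact n0 h.symm
  · exact n2 h.symm
  · exact n1 h.symm
  · exact n0 (add_right_cancel h).symm

theorem near_in_T (C : ChainSetup n E) {t : ℕ} (ht : 4 ≤ t) (ht2 : 5 * t < n)
    (G : CoarseGraining n t)
    (hn1 : n - 1 < n) (hopen : (∃ k, G.T k = ∅) → C.Hbond ⟨n - 1, hn1⟩ = 0)
    {d : ℕ} (hd : d + 1 ≤ t / 4) {i : Fin n} (hi : nearBad C G d i) :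
    ∃ k, bondIn i (G.T k) := by
  obtain ⟨j, ⟨hj, hH⟩, c, hc, he⟩ := hi
  obtain ⟨k, e, hek, hje⟩ := seg_cover (by omega) G j
  have het : t - 1 ≤ e := by
    by_contra hlt
    apply hj k
    refine ⟨mem_seg.2 ⟨e, by omega, hje.symm⟩, mem_seg.2 ⟨e + 1, by omega, ?_⟩⟩
    rw [hje]; push_cast; ring
  have hr := G.hr k
  have hne : G.T k ≠ ∅ := by
    intro hemp
    obtain ⟨hkM, hs0, hsl⟩ := G.hTempty k hemp
    have hk : k = ⟨G.M - 1, Nat.sub_lt G.hMpos one_pos⟩ := Fin.ext hkM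
    have hcyc : cyc k = ⟨0, G.hMpos⟩ := by
      apply Fin.ext
      simp only [cyc, hkM]
      rw [Nat.sub_add_cancel G.hMpos, Nat.mod_self]
    have hsk : G.s k = ((G.s k : ℕ) : Fin n) := (Fin.cast_val_eq_self _).symm
    rw [← hk] at hsl
    have h0 := G.hs k
    rw [hcyc, hsk, ← Nat.cast_add] at h0
    have h1 := congrArg Fin.val h0
    rw [hs0, Fin.val_natCast] at h1
    have h2 : (G.s k : ℕ) + (t + G.r k) = n + G.r k := by omega
    rw [h2, Nat.add_mod_left, Nat.mod_eq_of_lt (by omega)] at h1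
    apply hH
    have : j = ⟨n - 1, hn1⟩ := by
      apply Fin.ext
      have h4 : (G.s k : ℕ) + e = n - 1 := by omega
      have h5 : j = (((G.s k : ℕ) + e : ℕ) : Fin n) := by
        rw [hje, Nat.cast_add, ← hsk]
      have h6 := congrArg Fin.val h5
      rw [Fin.val_natCast, h4, Nat.mod_eq_of_lt (by omega)] at h6
      exact h6
    rw [this]
    exact hopen ⟨k, hemp⟩
  obtain ⟨a, ha⟩ := (G.hT k).resolve_right hne
  have o1 := G.hoverlap₁ k hne
  have o2 := G.hoverlap₂ k hne
  rw [G.hs, ha] at o2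
  rw [ha] at o1
  obtain ⟨b, hab, hb1, hb2⟩ := overlap_pos ht ht2 _ _ _ hr o1 o2
  have hie : i = a + ((e + c - d - b : ℕ) : Fin n) := by
    have h3 : ((e + c - d - b : ℕ) : Fin n) + (d : Fin n) + (b : Fin n) = (e : Fin n) + (c : Fin n) := by
      rw [← Nat.cast_add, ← Nat.cast_add, ← Nat.cast_add]
      congr 1
      omega
    linear_combination he - h3 + hje - hab
  refine ⟨k, ?_⟩
  rw [ha]
  refine ⟨mem_seg.2 ⟨_, ?_, hie.symm⟩, mem_seg.2 ⟨e + c - d - b + 1, ?_, ?_⟩⟩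
  · omega
  · omega
  · rw [hie]; push_cast; ring

end Combi

section Ops

variable {E : Type*} [NormedAddCommGroup E] [InnerProductSpace ℂ E] [FiniteDimensional ℂ E]

theorem sa_inner {A : E →L[ℂ] E} (hA : IsSelfAdjoint A) (x y : E) :
    inner ℂ (A x) y = inner ℂ x (A y) := by
  have h := ContinuousLinearMap.adjoint_inner_left A y x
  rwa [← ContinuousLinearMap.star_eq_adjoint, hA.star_eq] at h

theorem IsProjector.app {P : E →L[ℂ] E} (hP : IsProjector P) (x : E) : P (P x) = P x := by
  have := congrArg (fun A : E →L[ℂ] E => A x) hP.2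
  simpa using this

theorem IsProjector.inner_self {P : E →L[ℂ] E} (hP : IsProjector P) (x : E) :
    inner ℂ x (P x) = ((‖P x‖ ^ 2 : ℝ) : ℂ) := by
  have h := sa_inner hP.1 x (P x)
  rw [hP.app] at h
  rw [← h, inner_self_eq_norm_sq_to_K]
  norm_cast

theorem IsProjector.one_sub {P : E →L[ℂ] E} (hP : IsProjector P) : IsProjector (1 - P) := by
  refine ⟨(IsSelfAdjoint.one _).sub hP.1, ?_⟩
  rw [mul_sub, sub_mul, sub_mul, hP.2]
  simp

theorem IsProjector.pyth {P : E →L[ℂ] E} (hP : IsProjector P) (x : E) :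
    ‖x‖ ^ 2 = ‖P x‖ ^ 2 + ‖(1 - P) x‖ ^ 2 := by
  have h1 := hP.inner_self x
  have h2 := hP.one_sub.inner_self x
  have h3 : inner ℂ x (P x) + inner ℂ x ((1 - P) x) = inner ℂ x x := by
    rw [← inner_add_right]; simp
  have h4 : inner ℂ x x = ((‖x‖ ^ 2 : ℝ) : ℂ) := by
    rw [inner_self_eq_norm_sq_to_K]; norm_cast
  rw [h1, h2, h4] at h3
  exact_mod_cast h3.symm

theorem IsProjector.norm_le {P : E →L[ℂ] E} (hP : IsProjector P) (x : E) : ‖P x‖ ≤ ‖x‖ := by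
  have := hP.pyth x
  apply le_of_sq_le_sq _ (norm_nonneg _)
  nlinarith [sq_nonneg ‖(1 - P) x‖]

theorem IsProjector.mul {P Q : E →L[ℂ] E} (hP : IsProjector P) (hQ : IsProjector Q)
    (h : Commute P Q) : IsProjector (P * Q) := by
  refine ⟨(hP.1.commute_iff hQ.1).1 h, ?_⟩
  rw [mul_assoc, ← mul_assoc Q, ← h.eq, mul_assoc P Q Q, hQ.2, ← mul_assoc, hP.2]

theorem isProjector_one : IsProjector (1 : E →L[ℂ] E) := ⟨IsSelfAdjoint.one _, one_mul _⟩

theorem isProjector_list {ι : Type*} (f : ι → E →L[ℂ] E) (hf : ∀ k, IsProjector (f k))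
    (hc : ∀ k l, Commute (f k) (f l)) (l : List ι) : IsProjector (l.map f).prod := by
  induction l with
  | nil => simpa using isProjector_one
  | cons a l ih =>
    rw [List.map_cons, List.prod_cons]
    apply (hf a).mul ih
    apply Commute.list_prod_right
    simp only [List.mem_map]
    rintro _ ⟨b, _, rfl⟩
    exact hc a b

/-- `‖ψ‖² − ‖∏(1-Q_k)ψ‖² ≤ Σ ‖Q_k ψ‖²` -/
theorem list_union {ι : Type*} (f : ι → E →L[ℂ] E) (hf : ∀ k, IsProjector (f k))
    (hc : ∀ k l, Commute (f k) (f l)) (l : List ι) (ψ : E) :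
    ‖ψ‖ ^ 2 - ‖(l.map (fun k => 1 - f k)).prod ψ‖ ^ 2 ≤ (l.map (fun k => ‖f k ψ‖ ^ 2)).sum := by
  induction l with
  | nil => simp
  | cons a l ih =>
    rw [List.map_cons, List.prod_cons, List.map_cons, List.sum_cons]
    set X := (l.map (fun k => 1 - f k)).prod with hX
    have hXp : IsProjector X := isProjector_list _ (fun k => (hf k).one_sub)
      (fun k l => (Commute.one_left _).sub_left ((Commute.one_right _).sub_right (hc k l))) l
    have hcm : Commute (f a) X := by
      apply Commute.list_prod_right
      simp only [List.mem_map]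
      rintro _ ⟨b, _, rfl⟩
      exact (Commute.one_right _).sub_right (hc a b)
    have h1 := (hf a).pyth (X ψ)
    have h2 : f a (X ψ) = X (f a ψ) := congrArg (fun A : E →L[ℂ] E => A ψ) hcm.eq
    have h3 := hXp.norm_le (f a ψ)
    rw [h2] at h1
    have h4 : ‖X (f a ψ)‖ ^ 2 ≤ ‖f a ψ‖ ^ 2 := by gcongr
    have h5 : ((1 - f a) * X) ψ = (1 - f a) (X ψ) := rfl
    rw [h5]
    linarith

theorem list_absorb_right {ι A : Type*} [Monoid A] (f : ι → A)
    (hc : ∀ k l, Commute (f k) (f l)) (l : List ι) {k : ι} (hk : k ∈ l) {x : A}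
    (hx : f k * x = f k) : (l.map f).prod * x = (l.map f).prod := by
  induction l with
  | nil => simp at hk
  | cons a l ih =>
    rw [List.map_cons, List.prod_cons]
    rcases List.mem_cons.1 hk with rfl | hk
    · have : Commute (f k) (l.map f).prod := by
        apply Commute.list_prod_right
        simp only [List.mem_map]
        rintro _ ⟨b, _, rfl⟩
        exact hc k b
      rw [this.eq, mul_assoc, hx]
    · rw [mul_assoc, ih hk]

theorem list_absorb_left {ι A : Type*} [Monoid A] (f : ι → A)
    (hc : ∀ k l, Commute (f k) (f l)) (l : List ι) {k : ι} (hk : k ∈ l) {x : A}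
    (hx : x * f k = f k) : x * (l.map f).prod = (l.map f).prod := by
  induction l with
  | nil => simp at hk
  | cons a l ih =>
    rw [List.map_cons, List.prod_cons]
    rcases List.mem_cons.1 hk with rfl | hk
    · rw [← mul_assoc, hx]
    · have : Commute (f a) (l.map f).prod := by
        apply Commute.list_prod_right
        simp only [List.mem_map]
        rintro _ ⟨b, _, rfl⟩
        exact hc a b
      rw [this.eq, ← mul_assoc, ih hk]

/-- splitting a word into a left part and a right part -/
theorem word_split {ι A : Type*} [Monoid A] (f : ι → A) (B : ι → Prop) [DecidablePred B]
    (w : List ι) (hw : w.Pairwise (fun x y => B x → ¬ B y → Commute (f x) (f y))) :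
    (w.map f).prod = ((w.filter (fun x => ¬ B x)).map f).prod * ((w.filter (fun x => B x)).map f).prod := by
  induction w with
  | nil => simp
  | cons a w ih =>
    rw [List.pairwise_cons] at hw
    rw [List.map_cons, List.prod_cons, ih hw.2]
    by_cases ha : B a
    · have : Commute (f a) ((w.filter (fun x => ¬ B x)).map f).prod := by
        apply Commute.list_prod_right
        simp only [List.mem_map, List.mem_filter]
        rintro _ ⟨b, ⟨hb, hb'⟩, rfl⟩
        exact hw.1 b hb ha (by simpa using hb')
      rw [← mul_assoc, this.eq]
      simp [ha, mul_assoc]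
    · simp [ha, mul_assoc]

theorem prod_absorb_right {ι A : Type*} [Monoid A] (f : ι → A) (X : A) (w : List ι)
    (h : ∀ x ∈ w, X * f x = X) : X * (w.map f).prod = X := by
  induction w with
  | nil => simp
  | cons a w ih =>
    rw [List.map_cons, List.prod_cons, ← mul_assoc, h a (by simp),
      ih (fun x hx => h x (by simp [hx]))]

theorem prod_absorb_left {ι A : Type*} [Monoid A] (f : ι → A) (X : A) (w : List ι)
    (h : ∀ x ∈ w, f x * X = X) : (w.map f).prod * X = X := by
  induction w with
  | nil => simp
  | cons a w ih =>
    rw [List.map_cons, List.prod_cons, mul_assoc, ih (fun x hx => h x (by simp [hx])), h a (by simp)]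

end Ops

namespace ChainSetup

variable {E : Type*} [NormedAddCommGroup E] [InnerProductSpace ℂ E] [FiniteDimensional ℂ E]
variable {n : ℕ} [NeZero n]

theorem Hbond_inner (C : ChainSetup n E) (i : Fin n) (v : E) :
    inner ℂ v (C.Hbond i v) = ((∑ j, ‖C.P i j v‖ ^ 2 : ℝ) : ℂ) := by
  simp only [Hbond, sum_apply, inner_sum, (C.proj i _).inner_self]
  push_cast; rfl

theorem hamOn_inner (C : ChainSetup n E) (F : Finset (Fin n)) (v : E) :
    inner ℂ v (C.hamOn F v) =
      ((∑ i ∈ Finset.univ.filter (fun i => bondIn i F), ∑ j, ‖C.P i j v‖ ^ 2 : ℝ) : ℂ) := by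
  simp only [hamOn, sum_apply, inner_sum, Hbond_inner]
  push_cast; rfl

theorem Hfull_inner (C : ChainSetup n E) (v : E) :
    inner ℂ v (C.Hfull v) = ((∑ i, ∑ j, ‖C.P i j v‖ ^ 2 : ℝ) : ℂ) := by
  simp only [Hfull, sum_apply, inner_sum, Hbond_inner]
  push_cast; rfl

theorem Hbond_eq_zero (C : ChainSetup n E) {i : Fin n} (h : C.Hbond i = 0) (j) : C.P i j = 0 := by
  ext v
  have := C.Hbond_inner i v
  rw [h] at this
  simp only [zero_apply, inner_zero_right] at this
  have h2 : (∑ j, ‖C.P i j v‖ ^ 2 : ℝ) = 0 := by exact_mod_cast this.symm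
  rw [Finset.sum_eq_zero_iff_of_nonneg (fun _ _ => by positivity)] at h2
  simpa using h2 j (Finset.mem_univ _)

theorem mem_ker_hamOn (C : ChainSetup n E) (F : Finset (Fin n)) (v : E) :
    v ∈ LinearMap.ker (C.hamOn F : E →ₗ[ℂ] E) ↔ ∀ i, bondIn i F → ∀ j, C.P i j v = 0 := by
  rw [LinearMap.mem_ker]
  constructor
  · intro h i hi j
    have := C.hamOn_inner F v
    rw [show C.hamOn F v = 0 from h, inner_zero_right] at this
    have h2 : (∑ i ∈ Finset.univ.filter (fun i => bondIn i F), ∑ j, ‖C.P i j v‖ ^ 2 : ℝ) = 0 := by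
      exact_mod_cast this.symm
    rw [Finset.sum_eq_zero_iff_of_nonneg (fun _ _ => by positivity)] at h2
    have h3 := h2 i (by simp [hi])
    rw [Finset.sum_eq_zero_iff_of_nonneg (fun _ _ => by positivity)] at h3
    simpa using h3 j (Finset.mem_univ _)
  · intro h
    show C.hamOn F v = 0
    simp only [hamOn, Hbond, sum_apply]
    apply Finset.sum_eq_zero
    intro i hi
    apply Finset.sum_eq_zero
    intro j _
    exact h i (by simpa using hi) j

theorem mem_ker_Hfull (C : ChainSetup n E) (v : E) :
    v ∈ LinearMap.ker (C.Hfull : E →ₗ[ℂ] E) ↔ ∀ i j, C.P i j v = 0 := by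
  rw [LinearMap.mem_ker]
  constructor
  · intro h i j
    have := C.Hfull_inner v
    rw [show C.Hfull v = 0 from h, inner_zero_right] at this
    have h2 : (∑ i, ∑ j, ‖C.P i j v‖ ^ 2 : ℝ) = 0 := by
      exact_mod_cast this.symm
    rw [Finset.sum_eq_zero_iff_of_nonneg (fun _ _ => by positivity)] at h2
    have h3 := h2 i (by simp)
    rw [Finset.sum_eq_zero_iff_of_nonneg (fun _ _ => by positivity)] at h3
    simpa using h3 j (Finset.mem_univ _)
  · intro h
    show C.Hfull v = 0
    simp only [Hfull, Hbond, sum_apply]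
    apply Finset.sum_eq_zero
    intro i hi
    apply Finset.sum_eq_zero
    intro j _
    exact h i j

theorem sa_Hbond (C : ChainSetup n E) (i : Fin n) : IsSelfAdjoint (C.Hbond i) :=
  isSelfAdjoint_sum _ (fun j _ => (C.proj i j).1)

theorem sa_hamOn (C : ChainSetup n E) (F : Finset (Fin n)) : IsSelfAdjoint (C.hamOn F) :=
  isSelfAdjoint_sum _ (fun i _ => C.sa_Hbond i)

theorem sa_Hfull (C : ChainSetup n E) : IsSelfAdjoint C.Hfull :=
  isSelfAdjoint_sum _ (fun i _ => C.sa_Hbond i)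

theorem one_sub_Qproj (C : ChainSetup n E) (F : Finset (Fin n)) :
    1 - C.Qproj F = (LinearMap.ker (C.hamOn F : E →ₗ[ℂ] E)).starProjection := by
  have h : C.Qproj F = (LinearMap.ker (C.hamOn F : E →ₗ[ℂ] E))ᗮ.starProjection := rfl
  rw [h, Submodule.starProjection_orthogonal]
  ext v; simp

theorem isProjector_Q (C : ChainSetup n E) (F : Finset (Fin n)) : IsProjector (C.Qproj F) := by
  have h : C.Qproj F = (LinearMap.ker (C.hamOn F : E →ₗ[ℂ] E))ᗮ.starProjection := rfl
  rw [h]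
  exact ⟨isSelfAdjoint_starProjection _, Submodule.isIdempotentElem_starProjection _⟩

theorem Q_eq_zero (C : ChainSetup n E) (F : Finset (Fin n)) {v : E}
    (hv : ∀ i j, C.P i j v = 0) : C.Qproj F v = 0 := by
  have h1 : (1 - C.Qproj F) v = v := by
    rw [one_sub_Qproj]
    exact Submodule.starProjection_eq_self_iff.2 ((C.mem_ker_hamOn F v).2 fun i _ j => hv i j)
  simpa using h1

theorem Q_commute (C : ChainSetup n E) (F : Finset (Fin n)) {X : E →L[ℂ] E}
    (hX : IsSelfAdjoint X) (h : Commute X (C.hamOn F)) : Commute X (C.Qproj F) := by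
  suffices Commute X (1 - C.Qproj F) by
    have := (Commute.one_right X).sub_right this
    simpa using this
  rw [one_sub_Qproj]
  set K := LinearMap.ker (C.hamOn F : E →ₗ[ℂ] E) with hK
  have hinv : ∀ v ∈ K, X v ∈ K := by
    intro v hv
    rw [hK, LinearMap.mem_ker] at hv ⊢
    have h2 : X (C.hamOn F v) = C.hamOn F (X v) := congrArg (fun A : E →L[ℂ] E => A v) h.eq
    have hv' : C.hamOn F v = 0 := hv
    rw [hv', map_zero] at h2
    exact h2.symm
  ext v
  show X (K.starProjection v) = K.starProjection (X v)
  symm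
  apply Submodule.eq_starProjection_of_mem_of_inner_eq_zero
  · exact hinv _ (Submodule.starProjection_apply_mem _ _)
  · intro w hw
    rw [← map_sub, sa_inner hX]
    exact Submodule.starProjection_inner_eq_zero _ _ (hinv w hw)

theorem bonds_disjoint {F F' : Finset (Fin n)} (h : Disjoint F F') {i i' : Fin n}
    (hi : bondIn i F) (hi' : bondIn i' F') :
    Disjoint ({i, i + 1} : Finset (Fin n)) ({i', i' + 1} : Finset (Fin n)) := by
  apply Finset.disjoint_of_subset_left _ (Finset.disjoint_of_subset_right _ h)
  · intro x hx
    simp only [Finset.mem_insert, Finset.mem_singleton] at hx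
    rcases hx with rfl | rfl
    · exact hi.1
    · exact hi.2
  · intro x hx
    simp only [Finset.mem_insert, Finset.mem_singleton] at hx
    rcases hx with rfl | rfl
    · exact hi'.1
    · exact hi'.2

theorem Q_commute_Q (C : ChainSetup n E) {F F' : Finset (Fin n)} (h : Disjoint F F') :
    Commute (C.Qproj F) (C.Qproj F') := by
  have h1 : Commute (C.hamOn F) (C.hamOn F') := by
    apply Commute.sum_left
    intro i hi
    apply Commute.sum_right
    intro i' hi'
    apply Commute.sum_left
    intro j _
    apply Commute.sum_right
    intro j' _
    exact C.locality _ _ _ _ (bonds_disjoint h (by simpa using hi) (by simpa using hi'))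
  have h2 := C.Q_commute F' (C.sa_hamOn F) h1
  exact C.Q_commute F' (C.isProjector_Q F).1 (C.Q_commute F (C.sa_hamOn F') h1.symm).symm

theorem P_absorb_left (C : ChainSetup n E) {F : Finset (Fin n)} {i : Fin n} (hi : bondIn i F) (j) :
    (1 - C.P i j) * (1 - C.Qproj F) = 1 - C.Qproj F := by
  have : C.P i j * (1 - C.Qproj F) = 0 := by
    rw [one_sub_Qproj]
    ext v
    exact (C.mem_ker_hamOn F _).1 (Submodule.starProjection_apply_mem _ _) i hi j
  rw [sub_mul, this, one_mul, sub_zero]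

theorem P_absorb_right (C : ChainSetup n E) {F : Finset (Fin n)} {i : Fin n} (hi : bondIn i F) (j) :
    (1 - C.Qproj F) * (1 - C.P i j) = 1 - C.Qproj F := by
  have := congrArg star (C.P_absorb_left hi j)
  rwa [star_mul, (C.proj i j).one_sub.1.star_eq, (C.isProjector_Q F).one_sub.1.star_eq] at this

end ChainSetup

section Detect

variable {E : Type*} [NormedAddCommGroup E] [InnerProductSpace ℂ E] [FiniteDimensional ℂ E]
variable {ι : Type*} [Fintype ι] [DecidableEq ι]

/-- the intermediate residues in the detectability lemma -/
noncomputable def dres (P : ι → E →L[ℂ] E) (ψ : E) : List ι → ι → ℝ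
  | [] => fun _ => 0
  | a :: w => Function.update (dres P ψ w) a ‖P a ((w.map (fun k => 1 - P k)).prod ψ)‖

theorem dres_nonneg (P : ι → E →L[ℂ] E) (ψ : E) (w : List ι) (j : ι) : 0 ≤ dres P ψ w j := by
  induction w with
  | nil => simp [dres]
  | cons a w ih =>
    by_cases h : j = a
    · subst h; simp [dres]
    · simpa [dres, Function.update_of_ne h] using ih

theorem dres_notMem (P : ι → E →L[ℂ] E) (ψ : E) (w : List ι) (j : ι) (hj : j ∉ w) :
    dres P ψ w j = 0 := by
  induction w with
  | nil => simp [dres]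
  | cons a w ih =>
    simp only [List.mem_cons, not_or] at hj
    simpa [dres, Function.update_of_ne hj.1] using ih hj.2

theorem dres_sum (P : ι → E →L[ℂ] E) (hP : ∀ k, IsProjector (P k)) (ψ : E) (w : List ι) :
    ∑ j, dres P ψ w j ^ 2 ≤ ‖ψ‖ ^ 2 - ‖(w.map (fun k => 1 - P k)).prod ψ‖ ^ 2 := by
  induction w with
  | nil => simp [dres]
  | cons a w ih =>
    rw [List.map_cons, List.prod_cons]
    set X := (w.map (fun k => 1 - P k)).prod
    have h1 := (hP a).pyth (X ψ)
    have h5 : ((1 - P a) * X) ψ = (1 - P a) (X ψ) := rfl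
    rw [h5]
    have h2 : ∑ j, dres P ψ (a :: w) j ^ 2 ≤ ‖P a (X ψ)‖ ^ 2 + ∑ j, dres P ψ w j ^ 2 := by
      rw [← Finset.add_sum_erase _ _ (Finset.mem_univ a),
        ← Finset.add_sum_erase _ (fun j => dres P ψ w j ^ 2) (Finset.mem_univ a)]
      have h3 : dres P ψ (a :: w) a = ‖P a (X ψ)‖ := by simp [dres, X]
      have h4 : ∑ j ∈ Finset.univ.erase a, dres P ψ (a :: w) j ^ 2 =
          ∑ j ∈ Finset.univ.erase a, dres P ψ w j ^ 2 := by
        apply Finset.sum_congr rfl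
        intro j hj
        rw [dres, Function.update_of_ne (Finset.ne_of_mem_erase hj)]
      rw [h3, h4]
      nlinarith [sq_nonneg (dres P ψ w a)]
    linarith

theorem dres_bound (P : ι → E →L[ℂ] E) (hP : ∀ k, IsProjector (P k)) (ψ : E) (N : ι → Finset ι)
    (hN : ∀ p q, q ∈ N p ↔ q ≠ p ∧ ¬ Commute (P p) (P q)) (w : List ι) (hw : w.Nodup)
    (p : ι) (hp : p ∈ w) :
    ‖P p ((w.map (fun k => 1 - P k)).prod ψ)‖ ≤ ∑ j ∈ N p, dres P ψ w j := by
  induction w with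
  | nil => simp at hp
  | cons a w ih =>
    rw [List.nodup_cons] at hw
    rw [List.map_cons, List.prod_cons]
    set X := (w.map (fun k => 1 - P k)).prod
    have h5 : ((1 - P a) * X) ψ = (1 - P a) (X ψ) := rfl
    rw [h5]
    by_cases hpa : p = a
    · subst hpa
      have : P p ((1 - P p) (X ψ)) = 0 := by simp [(hP p).app]
      rw [this, norm_zero]
      exact Finset.sum_nonneg fun j _ => dres_nonneg _ _ _ _
    · have hpw : p ∈ w := by simpa [hpa] using hp
      have ih' := ih hw.2 hpw
      by_cases hc : Commute (P p) (P a)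
      · have h1 : P p ((1 - P a) (X ψ)) = (1 - P a) (P p (X ψ)) := by
          have := congrArg (fun A : E →L[ℂ] E => A (X ψ)) ((Commute.one_right _).sub_right hc).eq
          exact this
        rw [h1]
        refine ((hP a).one_sub.norm_le _).trans (ih'.trans (le_of_eq ?_))
        apply Finset.sum_congr rfl
        intro j hj
        have : j ≠ a := by
          rintro rfl
          exact ((hN p j).1 hj).2 hc
        rw [dres, Function.update_of_ne this]
      · have ha : a ∈ N p := (hN p a).2 ⟨fun h => hpa h.symm, hc⟩
        have h1 : ‖P p ((1 - P a) (X ψ))‖ ≤ ‖P p (X ψ)‖ + ‖P a (X ψ)‖ := by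
          have : P p ((1 - P a) (X ψ)) = P p (X ψ) - P p (P a (X ψ)) := by simp
          rw [this]
          exact (norm_sub_le _ _).trans (by gcongr; exact (hP p).norm_le _)
        have h2 : ∑ j ∈ N p, dres P ψ (a :: w) j = ‖P a (X ψ)‖ + ∑ j ∈ N p, dres P ψ w j := by
          rw [← Finset.add_sum_erase _ _ ha, ← Finset.add_sum_erase _ (dres P ψ w) ha,
            dres_notMem P ψ w a hw.1, zero_add]
          congr 1
          · simp [dres, X]
          · apply Finset.sum_congr rfl
            intro j hj
            rw [dres, Function.update_of_ne (Finset.ne_of_mem_erase hj)]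
        rw [h2]
        linarith

/-- the detectability lemma -/
theorem detectability (P : ι → E →L[ℂ] E) (hP : ∀ k, IsProjector (P k)) (g : ℕ)
    (hg : ∀ p, Nat.card {q // q ≠ p ∧ ¬ Commute (P p) (P q)} ≤ g)
    (w : List ι) (hw : w.Nodup) (hw' : ∀ p, p ∈ w) (ψ : E) :
    ∑ p, ‖P p ((w.map (fun k => 1 - P k)).prod ψ)‖ ^ 2 ≤
      (g : ℝ) ^ 2 * (‖ψ‖ ^ 2 - ‖(w.map (fun k => 1 - P k)).prod ψ‖ ^ 2) := by
  classical
  set φ := (w.map (fun k => 1 - P k)).prod ψ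
  let N : ι → Finset ι := fun p => Finset.univ.filter (fun q => q ≠ p ∧ ¬ Commute (P p) (P q))
  have hN : ∀ p q, q ∈ N p ↔ q ≠ p ∧ ¬ Commute (P p) (P q) := by intro p q; simp [N]
  have hcard : ∀ p, (N p).card ≤ g := by
    intro p
    have := hg p
    rwa [Nat.card_eq_fintype_card, Fintype.card_subtype] at this
  have hsymm : ∀ p q, q ∈ N p ↔ p ∈ N q := by
    intro p q
    rw [hN, hN]
    exact ⟨fun h => ⟨h.1.symm, fun hh => h.2 hh.symm⟩, fun h => ⟨h.1.symm, fun hh => h.2 hh.symm⟩⟩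
  have h1 : ∀ p, ‖P p φ‖ ^ 2 ≤ g * ∑ j ∈ N p, dres P ψ w j ^ 2 := by
    intro p
    have hb := dres_bound P hP ψ N hN w hw p (hw' p)
    calc ‖P p φ‖ ^ 2 ≤ (∑ j ∈ N p, dres P ψ w j) ^ 2 := by gcongr
      _ ≤ (N p).card * ∑ j ∈ N p, dres P ψ w j ^ 2 := sq_sum_le_card_mul_sum_sq
      _ ≤ _ := by
        have : (0:ℝ) ≤ ∑ j ∈ N p, dres P ψ w j ^ 2 := Finset.sum_nonneg fun j _ => sq_nonneg _
        gcongr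
        exact hcard p
  have h2 : ∑ p, ∑ j ∈ N p, dres P ψ w j ^ 2 ≤ g * ∑ j, dres P ψ w j ^ 2 := by
    rw [Finset.sum_comm' (t' := Finset.univ) (s' := fun j => N j)
      (by intro x y; simp [hsymm x y]), Finset.mul_sum]
    apply Finset.sum_le_sum
    intro j _
    rw [Finset.sum_const, nsmul_eq_mul]
    gcongr
    exact hcard j
  calc ∑ p, ‖P p φ‖ ^ 2 ≤ ∑ p, g * ∑ j ∈ N p, dres P ψ w j ^ 2 := Finset.sum_le_sum fun p _ => h1 p
    _ = g * ∑ p, ∑ j ∈ N p, dres P ψ w j ^ 2 := by rw [Finset.mul_sum]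
    _ ≤ g * (g * ∑ j, dres P ψ w j ^ 2) := by gcongr
    _ = (g : ℝ) ^ 2 * ∑ j, dres P ψ w j ^ 2 := by ring
    _ ≤ _ := by gcongr; exact dres_sum P hP ψ w

end Detect

section Gap

variable {E : Type*} [NormedAddCommGroup E] [InnerProductSpace ℂ E] [FiniteDimensional ℂ E]

theorem minEig_le (A : E →L[ℂ] E) {c : ℝ} (hc : 0 < c) {v : E} (hv : v ≠ 0)
    (h : A v = (c : ℂ) • v) : minNonzeroEig A ≤ c :=
  csInf_le ⟨0, fun _ h => h.1.le⟩ ⟨hc, v, hv, h⟩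

theorem sa_symm {A : E →L[ℂ] E} (hA : IsSelfAdjoint A) : (A : E →ₗ[ℂ] E).IsSymmetric :=
  fun x y => sa_inner hA x y

theorem gap_le (A : E →L[ℂ] E) (hA : IsSelfAdjoint A)
    (hpos : ∀ v, 0 ≤ (inner ℂ v (A v)).re) {φ : E}
    (hφ : φ ∈ (LinearMap.ker (A : E →ₗ[ℂ] E))ᗮ) :
    minNonzeroEig A * ‖φ‖ ^ 2 ≤ (inner ℂ φ (A φ)).re := by
  have hT := sa_symm hA
  let b := hT.eigenvectorBasis rfl
  let ev := hT.eigenvalues rfl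
  have hb : ∀ i, A (b i) = (ev i : ℂ) • b i := fun i => hT.apply_eigenvectorBasis rfl i
  have hbn : ∀ i, b i ≠ 0 := fun i => b.orthonormal.ne_zero i
  have hev : ∀ i, 0 ≤ ev i := by
    intro i
    have := hpos (b i)
    rw [hb, inner_smul_right, inner_self_eq_norm_sq_to_K, b.orthonormal.1 i] at this
    simpa using this
  have h1 : inner ℂ φ (A φ) = ((∑ i, ev i * ‖inner ℂ (b i) φ‖ ^ 2 : ℝ) : ℂ) := by
    rw [← b.sum_inner_mul_inner]
    push_cast
    apply Finset.sum_congr rfl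
    intro i _
    rw [← sa_inner hA, hb, inner_smul_left, ← inner_conj_symm φ (b i), Complex.conj_ofReal,
      mul_left_comm, mul_comm ((starRingEnd ℂ) _), Complex.mul_conj, Complex.normSq_eq_norm_sq]
    push_cast; rfl
  rw [h1, Complex.ofReal_re, ← b.sum_sq_norm_inner_right, Finset.mul_sum]
  apply Finset.sum_le_sum
  intro i _
  rcases (hev i).eq_or_lt with h0 | h0
  · have hk : b i ∈ LinearMap.ker (A : E →ₗ[ℂ] E) := by
      rw [LinearMap.mem_ker]
      show A (b i) = 0
      rw [hb, ← h0]; simp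
    rw [(Submodule.mem_orthogonal _ _).1 hφ _ hk]; simp
  · gcongr
    exact minEig_le A h0 (hbn i) (hb i)

theorem gap_pos (A : E →L[ℂ] E) (hA : IsSelfAdjoint A)
    (hpos : ∀ v, 0 ≤ (inner ℂ v (A v)).re) (h0 : A ≠ 0) : 0 < minNonzeroEig A := by
  have hT := sa_symm hA
  let b := hT.eigenvectorBasis rfl
  let ev := hT.eigenvalues rfl
  have hb : ∀ i, A (b i) = (ev i : ℂ) • b i := fun i => hT.apply_eigenvectorBasis rfl i
  have hbn : ∀ i, b i ≠ 0 := fun i => b.orthonormal.ne_zero i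
  have hev : ∀ i, 0 ≤ ev i := by
    intro i
    have := hpos (b i)
    rw [hb, inner_smul_right, inner_self_eq_norm_sq_to_K, b.orthonormal.1 i] at this
    simpa using this
  have hne : {c : ℝ | 0 < c ∧ ∃ v : E, v ≠ 0 ∧ A v = (c : ℂ) • v}.Nonempty := by
    by_contra hemp
    apply h0
    have hz : ∀ i, A (b i) = 0 := by
      intro i
      rcases (hev i).eq_or_lt with h | h
      · rw [hb, ← h]; simp
      · exact absurd ⟨ev i, h, b i, hbn i, hb i⟩ hemp
    have : (A : E →ₗ[ℂ] E) = 0 := b.toBasis.ext (by intro i; simpa using hz i)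
    ext v
    exact congrArg (fun B : E →ₗ[ℂ] E => B v) this
  have hfin : {c : ℝ | 0 < c ∧ ∃ v : E, v ≠ 0 ∧ A v = (c : ℂ) • v}.Finite := by
    have h := Module.End.finite_hasEigenvalue (A : E →ₗ[ℂ] E)
    refine Set.Finite.subset (h.preimage (Complex.ofReal_injective.injOn)) ?_
    rintro c ⟨_, v, hv, hvc⟩
    exact Module.End.hasEigenvalue_of_hasEigenvector
      (Module.End.hasEigenvector_iff.2 ⟨Module.End.mem_eigenspace_iff.2 hvc, hv⟩)
  exact (hne.csInf_mem hfin).1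

theorem norm_aeval_le (K : E →L[ℂ] E) (hK : IsSelfAdjoint K) (p : Polynomial ℝ) {c : ℝ} (hc : 0 ≤ c)
    (h : ∀ x ∈ spectrum ℝ K, |p.eval x| ≤ c) : ‖Polynomial.aeval K p‖ ≤ c := by
  rw [← cfc_polynomial p K hK]
  exact norm_cfc_le hc h

end Gap

namespace ChainSetup

variable {E : Type*} [NormedAddCommGroup E] [InnerProductSpace ℂ E] [FiniteDimensional ℂ E]
variable {n : ℕ} [NeZero n]

/-- the left factor of `DL(t)` -/
noncomputable def PS (C : ChainSetup n E) {t : ℕ} (G : CoarseGraining n t) : E →L[ℂ] E :=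
  ((List.finRange G.M).map (fun k => 1 - C.Qproj (seg (G.s k) t))).prod

/-- the right factor of `DL(t)` -/
noncomputable def PT (C : ChainSetup n E) {t : ℕ} (G : CoarseGraining n t) : E →L[ℂ] E :=
  ((List.finRange G.M).map (fun k => 1 - C.Qproj (G.T k))).prod

theorem commS (C : ChainSetup n E) {t : ℕ} (G : CoarseGraining n t) (k l : Fin G.M) :
    Commute (C.Qproj (seg (G.s k) t)) (C.Qproj (seg (G.s l) t)) := by
  by_cases h : k = l
  · subst h; exact Commute.refl _
  · exact C.Q_commute_Q (G.hSdisj k l h)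

theorem commT (C : ChainSetup n E) {t : ℕ} (G : CoarseGraining n t) (k l : Fin G.M) :
    Commute (C.Qproj (G.T k)) (C.Qproj (G.T l)) := by
  by_cases h : k = l
  · subst h; exact Commute.refl _
  · exact C.Q_commute_Q (G.hTdisj k l h)

theorem comm_one_sub {A : Type*} [Ring A] {x y : A} (h : Commute x y) : Commute (1 - x) (1 - y) :=
  (Commute.one_left _).sub_left ((Commute.one_right _).sub_right h)

theorem isProjector_PS (C : ChainSetup n E) {t : ℕ} (G : CoarseGraining n t) :
    IsProjector (C.PS G) :=
  isProjector_list _ (fun k => (C.isProjector_Q _).one_sub)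
    (fun k l => comm_one_sub (C.commS G k l)) _

theorem isProjector_PT (C : ChainSetup n E) {t : ℕ} (G : CoarseGraining n t) :
    IsProjector (C.PT G) :=
  isProjector_list _ (fun k => (C.isProjector_Q _).one_sub)
    (fun k l => comm_one_sub (C.commT G k l)) _

theorem lower_vec (C : ChainSetup n E) {t : ℕ} (G : CoarseGraining n t) {ψ : E} (hψ : ‖ψ‖ = 1)
    {c : ℝ} (hc : C.coarseHam t G ψ = (c : ℂ) • ψ) : 1 - 3 * c ≤ ‖C.coarseDL t G ψ‖ ^ 2 := by
  have hS := list_union (fun k => C.Qproj (seg (G.s k) t)) (fun k => C.isProjector_Q _) (C.commS G)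
    (List.finRange G.M) ψ
  have hT := list_union (fun k => C.Qproj (G.T k)) (fun k => C.isProjector_Q _) (C.commT G)
    (List.finRange G.M) ψ
  change ‖ψ‖ ^ 2 - ‖C.PS G ψ‖ ^ 2 ≤ _ at hS
  change ‖ψ‖ ^ 2 - ‖C.PT G ψ‖ ^ 2 ≤ _ at hT
  rw [← List.ofFn_eq_map, List.sum_ofFn] at hS hT
  have hsum : (∑ k, ‖C.Qproj (seg (G.s k) t) ψ‖ ^ 2) + (∑ k, ‖C.Qproj (G.T k) ψ‖ ^ 2) = c := by
    have h1 : inner ℂ ψ (C.coarseHam t G ψ) =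
        (((∑ k, ‖C.Qproj (seg (G.s k) t) ψ‖ ^ 2) + (∑ k, ‖C.Qproj (G.T k) ψ‖ ^ 2) : ℝ) : ℂ) := by
      simp only [coarseHam, sum_apply, add_apply, inner_sum, inner_add_right,
        (C.isProjector_Q _).inner_self, Finset.sum_add_distrib]
      push_cast; rfl
    rw [hc, inner_smul_right, inner_self_eq_norm_sq_to_K, hψ] at h1
    simp only [RCLike.ofReal_one, one_pow, mul_one] at h1
    exact_mod_cast h1.symm
  have pS := C.isProjector_PS G
  have pT := C.isProjector_PT G
  have e0 : C.coarseDL t G ψ = C.PS G (C.PT G ψ) := rfl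
  rw [e0]
  have y1 := pS.pyth (C.PT G ψ)
  have y2 := pT.pyth ψ
  have y3 := pS.pyth ψ
  have y4 : ‖(1 - C.PS G) (C.PT G ψ)‖ ≤ ‖(1 - C.PS G) ψ‖ + ‖(1 - C.PT G) ψ‖ := by
    have : (1 - C.PS G) (C.PT G ψ) = (1 - C.PS G) ψ - (1 - C.PS G) ((1 - C.PT G) ψ) := by
      rw [← map_sub]; simp
    rw [this]
    exact (norm_sub_le _ _).trans (by gcongr; exact pS.one_sub.norm_le _)
  have y5 : ‖(1 - C.PS G) (C.PT G ψ)‖ ^ 2 ≤ (‖(1 - C.PS G) ψ‖ + ‖(1 - C.PT G) ψ‖) ^ 2 := by gcongr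
  rw [hψ] at *
  nlinarith [sq_nonneg (‖(1 - C.PS G) ψ‖ - ‖(1 - C.PT G) ψ‖), sq_nonneg (‖(1 - C.PS G) ψ‖)]

theorem sa_coarse (C : ChainSetup n E) {t : ℕ} (G : CoarseGraining n t) :
    IsSelfAdjoint (C.coarseHam t G) :=
  isSelfAdjoint_sum _ (fun _ _ => (C.isProjector_Q _).1.add (C.isProjector_Q _).1)

theorem coarse_pos (C : ChainSetup n E) {t : ℕ} (G : CoarseGraining n t) (v : E) :
    0 ≤ (inner ℂ v (C.coarseHam t G v)).re := by
  have h1 : inner ℂ v (C.coarseHam t G v) =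
        (((∑ k, ‖C.Qproj (seg (G.s k) t) v‖ ^ 2) + (∑ k, ‖C.Qproj (G.T k) v‖ ^ 2) : ℝ) : ℂ) := by
    simp only [coarseHam, sum_apply, add_apply, inner_sum, inner_add_right,
      (C.isProjector_Q _).inner_self, Finset.sum_add_distrib]
    push_cast; rfl
  rw [h1, Complex.ofReal_re]
  positivity

theorem norm_DL_le (C : ChainSetup n E) {t : ℕ} (G : CoarseGraining n t) (ψ : E) :
    ‖C.coarseDL t G ψ‖ ≤ ‖ψ‖ :=
  ((C.isProjector_PS G).norm_le (C.PT G ψ)).trans ((C.isProjector_PT G).norm_le ψ)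

theorem Hfull_pos (C : ChainSetup n E) (v : E) : 0 ≤ (inner ℂ v (C.Hfull v)).re := by
  rw [Hfull_inner, Complex.ofReal_re]
  positivity

theorem lower_bound (C : ChainSetup n E) {t : ℕ} (G : CoarseGraining n t) (hH0 : C.Hfull ≠ 0) :
    1 - 3 * minNonzeroEig (C.coarseHam t G) ≤
      sSup {x : ℝ | ∃ ψ : E, ‖ψ‖ = 1 ∧ ψ ∈ (LinearMap.ker (C.Hfull : E →ₗ[ℂ] E))ᗮ ∧
        x = ‖C.coarseDL t G ψ‖ ^ 2} := by
  set S := {x : ℝ | ∃ ψ : E, ‖ψ‖ = 1 ∧ ψ ∈ (LinearMap.ker (C.Hfull : E →ₗ[ℂ] E))ᗮ ∧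
        x = ‖C.coarseDL t G ψ‖ ^ 2} with hS
  have hbdd : BddAbove S := by
    refine ⟨1, ?_⟩
    rintro x ⟨ψ, h1, _, rfl⟩
    have := C.norm_DL_le G ψ
    rw [h1] at this
    exact pow_le_one₀ (norm_nonneg _) this
  have key : ∀ c : ℝ, ∀ v : E, v ≠ 0 → C.coarseHam t G v = (c : ℂ) • v →
      v ∈ (LinearMap.ker (C.Hfull : E →ₗ[ℂ] E))ᗮ → 1 - 3 * c ≤ sSup S := by
    intro c v hv hvc hvG
    have hn : ‖v‖ ≠ 0 := norm_ne_zero_iff.2 hv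
    set ψ : E := ((‖v‖⁻¹ : ℝ) : ℂ) • v with hψ
    have h1 : ‖ψ‖ = 1 := by
      rw [hψ, norm_smul, Complex.norm_real, norm_inv, norm_norm, inv_mul_cancel₀ hn]
    have h2 : C.coarseHam t G ψ = (c : ℂ) • ψ := by
      rw [hψ, map_smul, hvc, smul_comm]
    exact (C.lower_vec G h1 h2).trans
      (le_csSup hbdd ⟨ψ, h1, Submodule.smul_mem _ _ hvG, rfl⟩)
  by_cases hz : C.coarseHam t G = 0
  · obtain ⟨u, hu⟩ : ∃ u, C.Hfull u ≠ 0 := by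
      by_contra h
      push Not at h
      exact hH0 (ContinuousLinearMap.ext h)
    have hmin : minNonzeroEig (C.coarseHam t G) = 0 := by
      have : {c : ℝ | 0 < c ∧ ∃ v : E, v ≠ 0 ∧ C.coarseHam t G v = (c : ℂ) • v} = ∅ := by
        ext c
        simp only [Set.mem_ofPred_eq, Set.mem_empty_iff_false, iff_false, not_and, not_exists]
        intro hc v hv h
        rw [hz] at h
        rcases smul_eq_zero.1 h.symm with h | h
        · exact hc.ne' (by exact_mod_cast h)
        · exact hv h
      unfold minNonzeroEig
      rw [this, Real.sInf_empty]
    rw [hmin]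
    refine key 0 (C.Hfull u) hu (by rw [hz]; simp) ?_
    rw [Submodule.mem_orthogonal]
    intro w hw
    rw [← sa_inner C.sa_Hfull, show C.Hfull w = 0 from hw, inner_zero_left]
  · have hne : {c : ℝ | 0 < c ∧ ∃ v : E, v ≠ 0 ∧ C.coarseHam t G v = (c : ℂ) • v}.Nonempty := by
      by_contra hemp
      rw [Set.not_nonempty_iff_eq_empty] at hemp
      have := gap_pos _ (C.sa_coarse G) (C.coarse_pos G) hz
      unfold minNonzeroEig at this
      rw [hemp, Real.sInf_empty] at this
      exact lt_irrefl _ this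
    have : (1 - sSup S) / 3 ≤ minNonzeroEig (C.coarseHam t G) := by
      refine le_csInf hne ?_
      rintro c ⟨hc, v, hv, hvc⟩
      have := key c v hv hvc (by
        rw [Submodule.mem_orthogonal]
        intro w hw
        have hw0 : C.coarseHam t G w = 0 := by
          simp only [coarseHam, sum_apply, add_apply]
          apply Finset.sum_eq_zero
          intro k _
          rw [C.Q_eq_zero _ ((C.mem_ker_Hfull w).1 hw), C.Q_eq_zero _ ((C.mem_ker_Hfull w).1 hw),
            add_zero]
        have h3 := sa_inner (C.sa_coarse G) w v
        rw [hw0, inner_zero_left, hvc, inner_smul_right] at h3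
        rcases mul_eq_zero.1 h3.symm with h | h
        · exact absurd (by exact_mod_cast h) hc.ne'
        · exact h)
      linarith
    linarith

/-- all projector indices, sorted by layer -/
noncomputable def w0 (C : ChainSetup n E) : List ((i : Fin n) × Fin (C.m i)) :=
  (Finset.univ.toList).insertionSort (fun p q => C.layer p ≤ C.layer q)

theorem mem_w0 (C : ChainSetup n E) (p) : p ∈ C.w0 := by
  unfold w0
  rw [(List.perm_insertionSort _ _).mem_iff]
  simp

theorem nodup_w0 (C : ChainSetup n E) : C.w0.Nodup := by
  unfold w0
  rw [(List.perm_insertionSort _ _).nodup_iff]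
  exact Finset.nodup_toList _

theorem sorted_w0 (C : ChainSetup n E) : C.w0.Pairwise (fun p q => C.layer p ≤ C.layer q) := by
  unfold w0
  have h1 : Std.Total (fun p q : (i : Fin n) × Fin (C.m i) => C.layer p ≤ C.layer q) :=
    ⟨fun p q => le_total _ _⟩
  have h2 : IsTrans _ (fun p q : (i : Fin n) × Fin (C.m i) => C.layer p ≤ C.layer q) :=
    ⟨fun p q r h h' => le_trans h h'⟩
  exact List.pairwise_insertionSort _ _

/-- the factor `1 - P` -/
noncomputable def fac (C : ChainSetup n E) (p : (i : Fin n) × Fin (C.m i)) : E →L[ℂ] E :=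
  1 - C.P p.1 p.2

/-- a detectability operator of `H` -/
noncomputable def D (C : ChainSetup n E) : E →L[ℂ] E := (C.w0.map C.fac).prod

theorem star_prod_sa {ι : Type*} (f : ι → E →L[ℂ] E) (hf : ∀ k, IsSelfAdjoint (f k)) (w : List ι) :
    star (w.map f).prod = (w.reverse.map f).prod := by
  induction w with
  | nil => simp
  | cons a w ih => simp [ih, (hf a).star_eq]

theorem sa_fac (C : ChainSetup n E) (p) : IsSelfAdjoint (C.fac p) := (C.proj p.1 p.2).one_sub.1

/-- the word of `(D†D)^q` with levels -/
noncomputable def W (C : ChainSetup n E) : ℕ → List (((i : Fin n) × Fin (C.m i)) × ℕ)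
  | 0 => []
  | q + 1 => W C q ++
      (C.w0.reverse.map (fun p => (p, 2 * (C.L - 1) * q + (C.L - 1 - (C.layer p : ℕ)))) ++
        C.w0.map (fun p => (p, 2 * (C.L - 1) * q + (C.L - 1) + (C.layer p : ℕ))))

theorem W_prod (C : ChainSetup n E) (q : ℕ) :
    ((C.W q).map (fun x => C.fac x.1)).prod = (star C.D * C.D) ^ q := by
  induction q with
  | zero => simp [W]
  | succ q ih =>
    rw [W, List.map_append, List.prod_append, ih, List.map_append, List.prod_append,
      List.map_map, List.map_map, pow_succ, D, star_prod_sa _ C.sa_fac]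
    rfl

/-- ordering relation of leveled letters -/
def lrel (C : ChainSetup n E) (x y : ((i : Fin n) × Fin (C.m i)) × ℕ) : Prop :=
  x.2 < y.2 ∨ (x.2 = y.2 ∧ C.layer x.1 = C.layer y.1)

theorem W_level (C : ChainSetup n E) (q : ℕ) : ∀ x ∈ C.W q, x.2 ≤ 2 * (C.L - 1) * q ∧
    (x.2 = 2 * (C.L - 1) * q → (C.layer x.1 : ℕ) = C.L - 1) := by
  induction q with
  | zero => simp [W]
  | succ q ih =>
    have hm : 2 * (C.L - 1) * (q + 1) = 2 * (C.L - 1) * q + 2 * (C.L - 1) := by ring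
    intro x hx
    rw [W, List.mem_append, List.mem_append] at hx
    rw [hm]
    set Z := 2 * (C.L - 1) * q
    rcases hx with hx | hx | hx
    · have h := ih x hx
      have hl := (C.layer x.1).isLt
      refine ⟨by omega, fun h' => h.2 (by omega)⟩
    · obtain ⟨p, _, rfl⟩ := List.mem_map.1 hx
      have hl := (C.layer p).isLt
      dsimp only
      refine ⟨by omega, by omega⟩
    · obtain ⟨p, _, rfl⟩ := List.mem_map.1 hx
      have hl := (C.layer p).isLt
      dsimp only
      refine ⟨by omega, by omega⟩

theorem W_pairwise (C : ChainSetup n E) (q : ℕ) : (C.W q).Pairwise C.lrel := by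
  induction q with
  | zero => simp [W]
  | succ q ih =>
    rw [W, List.pairwise_append]
    refine ⟨ih, ?_, ?_⟩
    · rw [List.pairwise_append]
      refine ⟨?_, ?_, ?_⟩
      · rw [List.pairwise_map, List.pairwise_reverse]
        apply C.sorted_w0.imp
        intro a b hab
        have h1 := (C.layer a).isLt
        have h2 := (C.layer b).isLt
        have hab' : (C.layer a : ℕ) ≤ C.layer b := hab
        unfold lrel
        dsimp only
        rw [Fin.ext_iff]
        omega
      · rw [List.pairwise_map]
        apply C.sorted_w0.imp
        intro a b hab
        have h1 := (C.layer a).isLt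
        have h2 := (C.layer b).isLt
        have hab' : (C.layer a : ℕ) ≤ C.layer b := hab
        unfold lrel
        dsimp only
        rw [Fin.ext_iff]
        omega
      · intro x hx y hy
        obtain ⟨a, _, rfl⟩ := List.mem_map.1 hx
        obtain ⟨b, _, rfl⟩ := List.mem_map.1 hy
        have h1 := (C.layer a).isLt
        have h2 := (C.layer b).isLt
        unfold lrel
        dsimp only
        rw [Fin.ext_iff]
        omega
    · intro x hx y hy
      have h := C.W_level q x hx
      rw [List.mem_append] at hy
      unfold lrel
      rw [Fin.ext_iff]
      have h0 := (C.layer x.1).isLt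
      set Z := 2 * (C.L - 1) * q
      rcases hy with hy | hy
      · obtain ⟨b, _, rfl⟩ := List.mem_map.1 hy
        have h2 := (C.layer b).isLt
        dsimp only
        omega
      · obtain ⟨b, _, rfl⟩ := List.mem_map.1 hy
        have h2 := (C.layer b).isLt
        dsimp only
        omega

theorem absorb (C : ChainSetup n E) {t : ℕ} (ht : 4 ≤ t) (ht2 : 5 * t < n)
    (G : CoarseGraining n t)
    (hn1 : n - 1 < n) (hopen : (∃ k, G.T k = ∅) → C.Hbond ⟨n - 1, hn1⟩ = 0)
    (q : ℕ) (hq : 2 * (C.L - 1) * q + 1 ≤ t / 4) :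
    C.PS G * (star C.D * C.D) ^ q * C.PT G = C.PS G * C.PT G := by
  classical
  rw [← W_prod, word_split (fun x : ((i : Fin n) × Fin (C.m i)) × ℕ => C.fac x.1)
    (fun x => nearBad C G x.2 x.1.1)]
  · rw [mul_assoc, mul_assoc _ _ (C.PT G), prod_absorb_left _ (C.PT G), ← mul_assoc,
      prod_absorb_right _ (C.PS G)]
    · intro x hx
      rw [List.mem_filter] at hx
      have hb : ¬ nearBad C G x.2 x.1.1 := by simpa using hx.2
      by_cases h0 : C.Hbond x.1.1 = 0
      · rw [fac, C.Hbond_eq_zero h0, sub_zero, mul_one]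
      · have : ∃ k, bondIn x.1.1 (seg (G.s k) t) := by
          by_contra hcon
          push Not at hcon
          exact hb (badBond.near ⟨hcon, h0⟩ _)
        obtain ⟨k, hk⟩ := this
        exact list_absorb_right (fun k => 1 - C.Qproj (seg (G.s k) t))
          (fun k l => comm_one_sub (C.commS G k l)) _ (List.mem_finRange k) (C.P_absorb_right hk _)
    · intro x hx
      rw [List.mem_filter] at hx
      have hb : nearBad C G x.2 x.1.1 := by simpa using hx.2
      have hl := (C.W_level q x hx.1).1
      obtain ⟨k, hk⟩ := near_in_T C ht ht2 G hn1 hopen (by omega) hb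
      exact list_absorb_left (fun k => 1 - C.Qproj (G.T k))
        (fun k l => comm_one_sub (C.commT G k l)) _ (List.mem_finRange k) (C.P_absorb_left hk _)
  · apply (C.W_pairwise q).imp
    intro x y hxy hx hy
    apply comm_one_sub
    rcases hxy with h | h
    · exact C.locality _ _ _ _ (near_disjoint h hx hy)
    · exact C.layers _ _ h.2

end ChainSetup

namespace ChainSetup

variable {E : Type*} [NormedAddCommGroup E] [InnerProductSpace ℂ E] [FiniteDimensional ℂ E]
variable {n : ℕ} [NeZero n]

theorem fac_fix (C : ChainSetup n E) {v : E} (hv : ∀ i j, C.P i j v = 0) (p) : C.fac p v = v := by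
  simp [fac, hv]

theorem list_fix {ι : Type*} (f : ι → E →L[ℂ] E) {v : E} (hf : ∀ k, f k v = v) (w : List ι) :
    (w.map f).prod v = v := by
  induction w with
  | nil => simp
  | cons a w ih =>
    rw [List.map_cons, List.prod_cons]
    show f a ((w.map f).prod v) = v
    rw [ih, hf]

theorem D_fix (C : ChainSetup n E) {v : E} (hv : ∀ i j, C.P i j v = 0) : C.D v = v :=
  list_fix _ (C.fac_fix hv) _

theorem starD_fix (C : ChainSetup n E) {v : E} (hv : ∀ i j, C.P i j v = 0) : star C.D v = v := by
  rw [D, star_prod_sa _ C.sa_fac]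
  exact list_fix _ (C.fac_fix hv) _

theorem preserve (C : ChainSetup n E) (X : E →L[ℂ] E)
    (hX : ∀ v, (∀ i j, C.P i j v = 0) → star X v = v) {φ : E}
    (hφ : φ ∈ (LinearMap.ker (C.Hfull : E →ₗ[ℂ] E))ᗮ) :
    X φ ∈ (LinearMap.ker (C.Hfull : E →ₗ[ℂ] E))ᗮ := by
  rw [Submodule.mem_orthogonal] at hφ ⊢
  intro w hw
  have h := ContinuousLinearMap.adjoint_inner_left X φ w
  rw [← ContinuousLinearMap.star_eq_adjoint, hX w ((C.mem_ker_Hfull w).1 hw)] at h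
  rw [← h]
  exact hφ w hw

theorem PT_fix (C : ChainSetup n E) {t : ℕ} (G : CoarseGraining n t) {v : E}
    (hv : ∀ i j, C.P i j v = 0) : C.PT G v = v :=
  list_fix _ (fun k => by simp [C.Q_eq_zero _ hv]) _

theorem D_bound (C : ChainSetup n E) (hH0 : C.Hfull ≠ 0) (hg : 0 < C.g) {φ : E}
    (hφ : φ ∈ (LinearMap.ker (C.Hfull : E →ₗ[ℂ] E))ᗮ) :
    ‖C.D φ‖ ^ 2 ≤ (1 - C.gap / ((C.g : ℝ) ^ 2 + C.gap)) * ‖φ‖ ^ 2 := by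
  classical
  have hpos : 0 < C.gap := gap_pos _ C.sa_Hfull C.Hfull_pos hH0
  have h1 := detectability (fun p : (i : Fin n) × Fin (C.m i) => C.P p.1 p.2)
    (fun p => C.proj p.1 p.2) C.g C.gbound C.w0 C.nodup_w0 C.mem_w0 φ
  change ∑ p : (i : Fin n) × Fin (C.m i), ‖C.P p.1 p.2 (C.D φ)‖ ^ 2 ≤
    (C.g : ℝ) ^ 2 * (‖φ‖ ^ 2 - ‖C.D φ‖ ^ 2) at h1
  have h2 : C.D φ ∈ (LinearMap.ker (C.Hfull : E →ₗ[ℂ] E))ᗮ :=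
    C.preserve _ (fun v hv => C.starD_fix hv) hφ
  have h3 := gap_le _ C.sa_Hfull C.Hfull_pos h2
  rw [Hfull_inner, Complex.ofReal_re] at h3
  rw [Fintype.sum_sigma] at h1
  have h4 : C.gap * ‖C.D φ‖ ^ 2 ≤ (C.g : ℝ) ^ 2 * (‖φ‖ ^ 2 - ‖C.D φ‖ ^ 2) := h3.trans h1
  have hg' : (0 : ℝ) < C.g := by exact_mod_cast hg
  have h5 : 1 - C.gap / ((C.g : ℝ) ^ 2 + C.gap) = (C.g : ℝ) ^ 2 / ((C.g : ℝ) ^ 2 + C.gap) := by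
    field_simp
    ring
  rw [h5, div_mul_eq_mul_div, le_div_iff₀ (by positivity)]
  nlinarith

theorem poly_bound (C : ChainSetup n E) {μ : ℝ} (hμ : 0 ≤ μ)
    (hD : ∀ φ ∈ (LinearMap.ker (C.Hfull : E →ₗ[ℂ] E))ᗮ, ‖C.D φ‖ ^ 2 ≤ μ * ‖φ‖ ^ 2)
    (p : Polynomial ℝ) {c : ℝ} (hc : 0 ≤ c) (hp : ∀ x, 0 ≤ x → x ≤ μ → |p.eval x| ≤ c) {φ : E}
    (hφ : φ ∈ (LinearMap.ker (C.Hfull : E →ₗ[ℂ] E))ᗮ) :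
    ‖Polynomial.aeval (star C.D * C.D) p φ‖ ≤ c * ‖φ‖ := by
  set Gp := (LinearMap.ker (C.Hfull : E →ₗ[ℂ] E))ᗮ with hGp
  set Q := Gp.starProjection with hQ
  have hQs : IsSelfAdjoint Q := isSelfAdjoint_starProjection _
  have hQQ : Q * Q = Q := Submodule.isIdempotentElem_starProjection _
  set K := star C.D * C.D with hK
  have hKs : IsSelfAdjoint K := IsSelfAdjoint.star_mul_self _
  have hinv : ∀ v ∈ Gp, K v ∈ Gp := by
    intro v hv
    refine C.preserve K (fun v hv => ?_) hv
    rw [hKs.star_eq]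
    show star C.D (C.D v) = v
    rw [C.D_fix hv, C.starD_fix hv]
  have hcomm : K * Q = Q * K := by
    have h1 : Q * (K * Q) = K * Q := by
      ext v
      exact Submodule.starProjection_eq_self_iff.2 (hinv _ (Submodule.starProjection_apply_mem _ _))
    have h2 := congrArg star h1
    simp only [star_mul, hKs.star_eq, hQs.star_eq] at h2
    calc K * Q = Q * (K * Q) := h1.symm
      _ = Q * K * Q := (mul_assoc _ _ _).symm
      _ = Q * K := h2
  set K' := star (C.D * Q) * (C.D * Q) with hK'
  have hK'e : K' = K * Q := by
    rw [hK', star_mul, hQs.star_eq, mul_assoc, ← mul_assoc (star C.D), ← hK, hcomm, ← mul_assoc, hQQ]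
  have hpow : ∀ j, K' ^ j * Q = K ^ j * Q := by
    intro j
    induction j with
    | zero => simp
    | succ j ih =>
      have e : K' * Q = Q * K := by
        calc K' * Q = K * Q * Q := by rw [hK'e]
          _ = K * (Q * Q) := mul_assoc _ _ _
          _ = K * Q := by rw [hQQ]
          _ = Q * K := hcomm
      calc K' ^ (j + 1) * Q = K' ^ j * K' * Q := by rw [pow_succ]
        _ = K' ^ j * (K' * Q) := mul_assoc _ _ _
        _ = K' ^ j * (Q * K) := by rw [e]
        _ = K' ^ j * Q * K := (mul_assoc _ _ _).symm
        _ = K ^ j * Q * K := by rw [ih]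
        _ = K ^ j * (Q * K) := mul_assoc _ _ _
        _ = K ^ j * (K * Q) := by rw [hcomm]
        _ = K ^ j * K * Q := (mul_assoc _ _ _).symm
        _ = K ^ (j + 1) * Q := by rw [pow_succ]
  have haev : Polynomial.aeval K' p * Q = Polynomial.aeval K p * Q := by
    rw [Polynomial.aeval_eq_sum_range, Polynomial.aeval_eq_sum_range, Finset.sum_mul, Finset.sum_mul]
    apply Finset.sum_congr rfl
    intro j _
    rw [smul_mul_assoc, smul_mul_assoc, hpow]
  have hQφ : Q φ = φ := Submodule.starProjection_eq_self_iff.2 hφ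
  have h1 : Polynomial.aeval K p φ = Polynomial.aeval K' p φ := by
    have := congrArg (fun A : E →L[ℂ] E => A φ) haev
    simp only [ContinuousLinearMap.mul_apply, hQφ] at this
    exact this.symm
  have hnorm : ‖K'‖ ≤ μ := by
    have h2 : ‖C.D * Q‖ ≤ Real.sqrt μ := by
      apply ContinuousLinearMap.opNorm_le_bound _ (Real.sqrt_nonneg _)
      intro v
      apply le_of_sq_le_sq _ (by positivity)
      rw [mul_pow, Real.sq_sqrt hμ]
      have h3 := hD (Q v) (Submodule.starProjection_apply_mem _ _)
      have h4 : ‖Q v‖ ≤ ‖v‖ := IsProjector.norm_le ⟨hQs, hQQ⟩ v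
      refine h3.trans ?_
      gcongr
    calc ‖K'‖ = ‖C.D * Q‖ * ‖C.D * Q‖ := CStarRing.norm_star_mul_self
      _ ≤ Real.sqrt μ * Real.sqrt μ := by gcongr
      _ = μ := Real.mul_self_sqrt hμ
  rw [h1]
  refine (ContinuousLinearMap.le_opNorm _ _).trans ?_
  gcongr
  apply norm_aeval_le _ (IsSelfAdjoint.star_mul_self _) p hc
  intro x hx
  have hx0 : 0 ≤ x := by
    have hnn : (0 : E →L[ℂ] E) ≤ K' := star_mul_self_nonneg _
    exact spectrum_nonneg_of_nonneg hnn hx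
  have hx1 : x ≤ μ := by
    rcases subsingleton_or_nontrivial E with hE | hE
    · exact absurd hx (by
        have : Subsingleton (E →L[ℂ] E) := inferInstance
        simp [spectrum.of_subsingleton])
    · have := spectrum.norm_le_norm_of_mem hx
      rw [Real.norm_eq_abs] at this
      exact (le_abs_self x).trans (this.trans hnorm)
  exact hp x hx0 hx1

theorem absorb_poly (C : ChainSetup n E) (A B K : E →L[ℂ] E) (p : Polynomial ℝ)
    (h : ∀ j ≤ p.natDegree, A * K ^ j * B = A * B) :
    A * Polynomial.aeval K p * B = p.eval 1 • (A * B) := by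
  rw [Polynomial.aeval_eq_sum_range, Polynomial.eval_eq_sum_range, Finset.mul_sum, Finset.sum_mul,
    Finset.sum_smul]
  apply Finset.sum_congr rfl
  intro j hj
  rw [mul_smul_comm, smul_mul_assoc, h j (by simpa [Nat.lt_succ_iff] using hj)]
  simp

end ChainSetup

namespace ChainSetup

variable {E : Type*} [NormedAddCommGroup E] [InnerProductSpace ℂ E] [FiniteDimensional ℂ E]
variable {n : ℕ} [NeZero n]

theorem degree_arith {t L : ℕ} (hL : 0 < L) (ht : 8 * L ^ 2 < t) {j : ℕ}
    (hj : j ≤ (⌈(t : ℝ) / (8 * L)⌉).natAbs) : 2 * (L - 1) * j + 1 ≤ t / 4 := by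
  have hLr : (0 : ℝ) < L := by exact_mod_cast hL
  have h0 : 0 ≤ ⌈(t : ℝ) / (8 * L)⌉ := Int.ceil_nonneg (by positivity)
  have h1 : (j : ℤ) ≤ ⌈(t : ℝ) / (8 * L)⌉ := by omega
  have h2 : (j : ℝ) < (t : ℝ) / (8 * L) + 1 := by
    have h3 : ((j : ℤ) : ℝ) ≤ (⌈(t : ℝ) / (8 * L)⌉ : ℝ) := by exact_mod_cast h1
    have := Int.ceil_lt_add_one ((t : ℝ) / (8 * L))
    push_cast at h3
    linarith
  have h4 : (8 * L : ℝ) * j < t + 8 * L := by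
    have : (8 * L : ℝ) * ((t : ℝ) / (8 * L) + 1) = t + 8 * L := by field_simp
    rw [← this]
    gcongr
  have h5 : 8 * L * j < t + 8 * L := by exact_mod_cast h4
  rw [Nat.le_div_iff_mul_le (by norm_num)]
  obtain ⟨l, rfl⟩ : ∃ l, L = l + 1 := ⟨L - 1, by omega⟩
  rw [Nat.add_sub_cancel]
  rcases Nat.eq_zero_or_pos l with rfl | hl
  · simp at ht ⊢; omega
  · have h6 : l * (8 * (l + 1) * j) < l * (t + 8 * (l + 1)) := by
      exact Nat.mul_lt_mul_of_pos_left h5 hl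
    have h7 : (l + 1) * ((2 * l * j + 1) * 4) < (l + 1) * (t + 1) := by nlinarith
    have := Nat.lt_of_mul_lt_mul_left h7
    omega

theorem upper_bound (C : ChainSetup n E)
    (t : ℕ) (ht1 : 8 * C.L ^ 2 < t) (ht2 : 5 * t < n)
    (G : CoarseGraining n t)
    (hn1 : n - 1 < n) (hopen : (∃ k, G.T k = ∅) → C.Hbond ⟨n - 1, hn1⟩ = 0)
    (hH0 : C.Hfull ≠ 0) (hg : 0 < C.g) :
    sSup {x : ℝ | ∃ ψ : E, ‖ψ‖ = 1 ∧ ψ ∈ (LinearMap.ker (C.Hfull : E →ₗ[ℂ] E))ᗮ ∧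
        x = ‖C.coarseDL t G ψ‖ ^ 2} ≤
      sSup {y : ℝ | ∃ x ∈ Set.Ioo (0 : ℝ) (1 - C.gap / ((C.g : ℝ) ^ 2 + C.gap)),
        y = stepPoly ((t : ℝ) / (8 * C.L)) (C.gap / ((C.g : ℝ) ^ 2 + C.gap)) x} := by
  have hpos : 0 < C.gap := gap_pos _ C.sa_Hfull C.Hfull_pos hH0
  have hg' : (0 : ℝ) < C.g := by exact_mod_cast hg
  have hL : 0 < C.L := by
    by_contra h
    apply hH0
    ext v
    have : v ∈ LinearMap.ker (C.Hfull : E →ₗ[ℂ] E) := by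
      rw [C.mem_ker_Hfull]
      intro i j
      have := (C.layer ⟨i, j⟩).isLt
      omega
    exact this
  have ht4 : 4 ≤ t := by nlinarith
  set ν := C.gap / ((C.g : ℝ) ^ 2 + C.gap) with hν
  have hν0 : 0 < ν := by positivity
  have hν1 : ν < 1 := by
    rw [hν, div_lt_one (by positivity)]
    nlinarith [sq_pos_of_pos hg']
  have hD := fun φ hφ => C.D_bound hH0 hg (φ := φ) hφ
  rw [← hν] at hD
  set k : ℤ := ⌈(t : ℝ) / (8 * C.L)⌉ with hk
  set b : ℝ := (Polynomial.Chebyshev.T ℝ k).eval ((1 + ν) / (1 - ν)) with hb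
  have hb1 : 1 ≤ b := by
    apply Polynomial.Chebyshev.one_le_eval_T_real
    rw [le_div_iff₀ (by linarith)]
    linarith
  have hb0 : 0 < b := by linarith
  -- the polynomial
  set p : Polynomial ℝ := Polynomial.C b⁻¹ * (Polynomial.Chebyshev.T ℝ k).comp
    (Polynomial.C (2 / (1 - ν)) * Polynomial.X + Polynomial.C (-1)) with hpdef
  have hpe : ∀ x, p.eval x = stepPoly ((t : ℝ) / (8 * C.L)) ν x := by
    intro x
    simp only [hpdef, stepPoly, Polynomial.eval_mul, Polynomial.eval_C, Polynomial.eval_comp,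
      Polynomial.eval_add, Polynomial.eval_X, ← hk, ← hb]
    rw [show 2 / (1 - ν) * x + -1 = -1 + 2 * x / (1 - ν) by ring]
    ring
  have hp1 : p.eval 1 = 1 := by
    rw [hpe, stepPoly, ← hk]
    have : -1 + 2 * 1 / (1 - ν) = (1 + ν) / (1 - ν) := by
      have : (1 - ν) ≠ 0 := by linarith
      field_simp
      ring
    rw [this, ← hb, div_self hb0.ne']
  have hpdeg : p.natDegree ≤ k.natAbs := by
    refine (Polynomial.natDegree_C_mul_le _ _).trans ?_
    refine Polynomial.natDegree_comp_le.trans ?_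
    rw [Polynomial.Chebyshev.natDegree_T]
    have := Polynomial.natDegree_linear_le (a := 2 / (1 - ν)) (b := (-1 : ℝ))
    exact (Nat.mul_le_mul_left _ this).trans (mul_one _).le
  have hpx : ∀ x, 0 ≤ x → x ≤ 1 - ν → |p.eval x| ≤ b⁻¹ := by
    intro x hx0 hx1
    rw [hpe, stepPoly, ← hk, ← hb, abs_div, abs_of_pos hb0, div_eq_mul_inv]
    have h : |(Polynomial.Chebyshev.T ℝ k).eval (-1 + 2 * x / (1 - ν))| ≤ 1 := by
      apply Polynomial.Chebyshev.abs_eval_T_real_le_one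
      have h1 : 2 * x / (1 - ν) ≤ 2 := by
        rw [div_le_iff₀ (by linarith)]; linarith
      have h2 : 0 ≤ 2 * x / (1 - ν) := div_nonneg (by linarith) (by linarith)
      rw [abs_le]
      constructor <;> linarith
    calc _ ≤ 1 * b⁻¹ := by gcongr
      _ = b⁻¹ := one_mul _
  have hub : ∀ ψ : E, ‖ψ‖ = 1 → ψ ∈ (LinearMap.ker (C.Hfull : E →ₗ[ℂ] E))ᗮ →
      ‖C.coarseDL t G ψ‖ ^ 2 ≤ b⁻¹ := by
    intro ψ h1 hψ
    have hφ : C.PT G ψ ∈ (LinearMap.ker (C.Hfull : E →ₗ[ℂ] E))ᗮ :=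
      C.preserve _ (fun v hv => by
        rw [(C.isProjector_PT G).1.star_eq]; exact C.PT_fix G hv) hψ
    have h2 := C.poly_bound (by linarith : 0 ≤ 1 - ν) hD p (inv_nonneg.2 hb0.le) hpx hφ
    have h3 := absorb_poly C (C.PS G) (C.PT G) (star C.D * C.D) p (fun j hj =>
      C.absorb ht4 ht2 G hn1 hopen j (degree_arith hL ht1 (hj.trans hpdeg)))
    rw [hp1, one_smul] at h3
    have h4 : C.coarseDL t G ψ =
        C.PS G (Polynomial.aeval (star C.D * C.D) p (C.PT G ψ)) := by
      have := congrArg (fun A : E →L[ℂ] E => A ψ) h3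
      exact this.symm
    have h5 : ‖C.coarseDL t G ψ‖ ≤ b⁻¹ := by
      rw [h4]
      refine ((C.isProjector_PS G).norm_le _).trans (h2.trans ?_)
      have h6 := (C.isProjector_PT G).norm_le ψ
      rw [h1] at h6
      calc b⁻¹ * ‖C.PT G ψ‖ ≤ b⁻¹ * 1 := by gcongr
        _ = b⁻¹ := mul_one _
    have h7 : b⁻¹ ≤ 1 := inv_le_one_of_one_le₀ hb1
    nlinarith [norm_nonneg (C.coarseDL t G ψ)]
  have hinv0 : 0 ≤ b⁻¹ := inv_nonneg.2 hb0.le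
  have hle : sSup {x : ℝ | ∃ ψ : E, ‖ψ‖ = 1 ∧ ψ ∈ (LinearMap.ker (C.Hfull : E →ₗ[ℂ] E))ᗮ ∧
        x = ‖C.coarseDL t G ψ‖ ^ 2} ≤ b⁻¹ := by
    apply Real.sSup_le _ hinv0
    rintro x ⟨ψ, h1, h2, rfl⟩
    exact hub ψ h1 h2
  refine hle.trans ?_
  have hbdd : BddAbove {y : ℝ | ∃ x ∈ Set.Ioo (0 : ℝ) (1 - ν),
      y = stepPoly ((t : ℝ) / (8 * C.L)) ν x} := by
    refine ⟨b⁻¹, ?_⟩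
    rintro y ⟨x, hx, rfl⟩
    rw [← hpe]
    exact (le_abs_self _).trans (hpx x hx.1.le hx.2.le)
  have hend : p.eval (1 - ν) = b⁻¹ := by
    rw [hpe, stepPoly, ← hk, ← hb, mul_div_assoc, div_self (by linarith)]
    norm_num
  have htend : Filter.Tendsto (fun x => p.eval x) (nhdsWithin (1 - ν) (Set.Iio (1 - ν)))
      (nhds b⁻¹) := by
    rw [← hend]
    exact p.continuous.continuousAt.tendsto.mono_left nhdsWithin_le_nhds
  refine le_of_tendsto htend ?_
  have hmem : Set.Ioo 0 (1 - ν) ∈ nhdsWithin (1 - ν) (Set.Iio (1 - ν)) :=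
    Ioo_mem_nhdsLT (by linarith)
  filter_upwards [hmem] with x hx
  exact le_csSup hbdd ⟨x, hx, hpe x⟩

end ChainSetup

/-- for a frustration-free chain Hamiltonian as in the setup, with spectral
gap `γ`, noncommutation degree `g`, `L` layers, coarse-grained Hamiltonian `H̄(t)` and
coarse-grained detectability operator `DL(t)` for `8L² < t < n/5`:
`1 − 3γ(H̄(t)) ≤ max_{ψ ∈ G⊥, ‖ψ‖=1} ‖DL(t)ψ‖² ≤ max_{x ∈ (0, 1−γ/(g²+γ))} step_{t/(8L), γ/(g²+γ)}(x)`. -/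
theorem stmt_13 {n : ℕ} [NeZero n] (C : ChainSetup n E)
    (t : ℕ) (ht1 : 8 * C.L ^ 2 < t) (ht2 : 5 * t < n)
    (G : CoarseGraining n t)
    (hopen : (∃ k, G.T k = ∅) → C.Hbond ⟨n - 1, by omega⟩ = 0)
    (hH0 : C.Hfull ≠ 0) (hg : 0 < C.g) :
    1 - 3 * minNonzeroEig (C.coarseHam t G) ≤
      sSup {x : ℝ | ∃ ψ : E, ‖ψ‖ = 1 ∧ ψ ∈ (LinearMap.ker (C.Hfull : E →ₗ[ℂ] E))ᗮ ∧
        x = ‖C.coarseDL t G ψ‖ ^ 2} ∧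
    sSup {x : ℝ | ∃ ψ : E, ‖ψ‖ = 1 ∧ ψ ∈ (LinearMap.ker (C.Hfull : E →ₗ[ℂ] E))ᗮ ∧
        x = ‖C.coarseDL t G ψ‖ ^ 2} ≤
      sSup {y : ℝ | ∃ x ∈ Set.Ioo (0 : ℝ) (1 - C.gap / ((C.g : ℝ) ^ 2 + C.gap)),
        y = stepPoly ((t : ℝ) / (8 * C.L)) (C.gap / ((C.g : ℝ) ^ 2 + C.gap)) x} := by
  exact ⟨C.lower_bound G hH0, C.upper_bound t ht1 ht2 G _ hopen hH0 hg⟩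
end
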